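/- Fix constants $c$, $C$, and $\gamma$ with $0 < c < 1/2$, $C > 1$, $\gamma > 0$, $\gamma < (1 - 2c)^2/2$, and $\gamma < (C-1)^2/2 - (C-1)^3/6$. For each $n \geq 1$, consider a uniformly random preference profile for $n$ girls and $n$ boys, and let $H_n$ be the number of stable husbands of a fixed girl (say girl $0$). Then there is a constant $K > 0$ such that for all $n \geq 2$, $\Pr\bigl(H_n < c \ln n \text{ or } H_n > C \ln n\bigr) \leq K\, n^{-\gamma}$. -/

import Mathlib

/-- A preference profile for `n` girls and `n` boys: each girl `g` ranks the
boys via a bijection `P.1 g : Fin n ≃ Fin n` (boy `b` occupies position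
`P.1 g b`, position `0` being her favorite), and each boy `b` ranks the girls
via `P.2 b`. -/
abbrev PrefProfile (n : ℕ) := (Fin n → Equiv.Perm (Fin n)) × (Fin n → Equiv.Perm (Fin n))

/-- Girl `g` strictly prefers boy `b` to boy `b'`. -/
def GirlPrefers {n : ℕ} (P : PrefProfile n) (g b b' : Fin n) : Prop := P.1 g b < P.1 g b'

/-- Boy `b` strictly prefers girl `g` to girl `g'`. -/
def BoyPrefers {n : ℕ} (P : PrefProfile n) (b g g' : Fin n) : Prop := P.2 b g < P.2 b g'

/-- A matching `M` (pairing girl `g` with boy `M g`) is stable if no girl `g`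
and boy `b` who are not matched to each other prefer each other to their
current partners. -/
def IsStableMatching {n : ℕ} (P : PrefProfile n) (M : Fin n ≃ Fin n) : Prop :=
  ¬ ∃ g b, b ≠ M g ∧ GirlPrefers P g b (M g) ∧ BoyPrefers P b g (M.symm b)

/-- The number of stable husbands of girl `g`: the number of boys `b` such that
some stable matching pairs `g` with `b`. -/
noncomputable def stableHusbandCount (n : ℕ) (P : PrefProfile n) (g : Fin n) : ℕ :=
  Nat.card {b : Fin n // ∃ M : Fin n ≃ Fin n, IsStableMatching P M ∧ M g = b}

/-!
Let the boys propose down their lists while girl `z` rejects every proposal she receives. Which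
boys propose to `z`, and in which order, does not depend on the ranking of `z`, and every
stable husband of `z` improves on all the boys who proposed to her before him. Conversely, a boy
who does so after every other girl has received a proposal and before some boy has been rejected by
everybody is a stable husband. Given the rankings of everyone else, the number of stable husbands
is therefore sandwiched between numbers of records of a uniformly random permutation, the lower
one restricted to a window of positions. The `i`-th position is a record with probability `1 / i`,
independently of the others, so Chernoff's bound applies with exponents `1 - c + c log c` and
`C log C - C + 1`, provided that the window contains `[n ^ ε, n ^ (1 - ε)]`.

A window that opens late or closes early leaves behind a matching of all couples but one which is
stable away from `z` and in which atypically many or few boys prefer `z` to their partner. A first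
moment bound over all matchings shows that this has superpolynomially small probability: a girl
prefers her partner to `m` other boys with probability `∫ (1 - t) ^ m` over `[0, 1]`, after which
the boys are independent, and the resulting integral over the cube is at most of order
`1 / (n - 1)!`.
-/

open Finset MeasureTheory unitInterval
open scoped BigOperators

section UniformProbability

variable {α β ι κ : Type*}

/-- The probability of `p` for a uniformly random element of a finite type, as a quotient of
cardinalities. -/
noncomputable def uniformProb (p : α → Prop) : ℝ := (Nat.card {x // p x} : ℝ) / (Nat.card α : ℝ)

lemma uniformProb_eq_expect [Fintype α] (p : α → Prop) [DecidablePred p] :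
    uniformProb p = 𝔼 x, if p x then (1 : ℝ) else 0 := by
  rw [uniformProb, Nat.card_eq_fintype_card, Nat.card_eq_fintype_card,
    Fintype.expect_eq_sum_div_card, sum_boole, Fintype.card_subtype]

lemma uniformProb_le_expect [Fintype α] {p : α → Prop} {f : α → ℝ} (hf : ∀ x, 0 ≤ f x)
    (hp : ∀ x, p x → 1 ≤ f x) : uniformProb p ≤ 𝔼 x, f x := by
  classical
  rw [uniformProb_eq_expect]
  refine expect_le_expect fun x _ => ?_
  split_ifs with hx
  exacts [hp x hx, hf x]

lemma uniformProb_mono [Finite α] {p q : α → Prop} (h : ∀ x, p x → q x) :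
    uniformProb p ≤ uniformProb q := by
  unfold uniformProb
  gcongr
  exact Nat.card_le_card_of_injective _ (Subtype.map_injective h Function.injective_id)

lemma uniformProb_le_one [Finite α] (p : α → Prop) : uniformProb p ≤ 1 :=
  div_le_one_of_le₀ (by exact_mod_cast Finite.card_subtype_le p) (by positivity)

lemma uniformProb_or_le [Finite α] (p q : α → Prop) :
    uniformProb (fun x => p x ∨ q x) ≤ uniformProb p + uniformProb q := by
  classical
  cases nonempty_fintype α
  rw [uniformProb_eq_expect p, uniformProb_eq_expect q, ← expect_add_distrib]
  refine uniformProb_le_expect (fun x => ?_) fun x hx => ?_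
  · split_ifs <;> norm_num
  · rcases hx with hx | hx <;> rw [if_pos hx] <;> split_ifs <;> norm_num

lemma uniformProb_exists_le [Finite α] [Fintype ι] (p : ι → α → Prop) :
    uniformProb (fun x => ∃ i, p i x) ≤ ∑ i, uniformProb (p i) := by
  classical
  cases nonempty_fintype α
  have indicator_nonneg : ∀ i x, (0 : ℝ) ≤ if p i x then 1 else 0 := fun i x => by
    split_ifs <;> norm_num
  simp only [uniformProb_eq_expect, ← expect_sum_comm]
  rw [← uniformProb_eq_expect]
  refine uniformProb_le_expect (fun x => sum_nonneg fun i _ => indicator_nonneg i x) ?_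
  rintro x ⟨i, hi⟩
  calc (1 : ℝ) = if p i x then 1 else 0 := by rw [if_pos hi]
    _ ≤ ∑ i, if p i x then 1 else 0 :=
      single_le_sum (f := fun i => if p i x then (1 : ℝ) else 0)
        (fun i _ => indicator_nonneg i x) (mem_univ i)

lemma uniformProb_comp_equiv (e : α ≃ β) (p : β → Prop) :
    uniformProb (fun x => p (e x)) = uniformProb p := by
  rw [uniformProb, uniformProb, Nat.card_congr e,
    Nat.card_congr (e.subtypeEquiv (p := fun x => p (e x)) fun _ => Iff.rfl)]

lemma expect_prod_univ [Fintype ι] [DecidableEq ι] [Fintype α] (f : ι → α → ℝ) :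
    𝔼 x : ι → α, ∏ i, f i (x i) = ∏ i, 𝔼 a, f i a := by
  simp only [Fintype.expect_eq_sum_div_card, prod_div_distrib, prod_univ_sum,
    Fintype.piFinset_univ]
  simp

lemma expect_prod_comp_embedding [Fintype ι] [Fintype κ] [DecidableEq κ] [Fintype α] [Nonempty α]
    (e : ι ↪ κ) (f : ι → α → ℝ) :
    𝔼 x : κ → α, ∏ i, f i (x (e i)) = ∏ i, 𝔼 a, f i a := by
  have prod_extend : ∀ g : ι → ℝ, ∏ i, g i = ∏ j, Function.extend e g 1 j := fun g => by
    rw [← prod_subset (subset_univ (univ.map e)), prod_map]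
    · simp only [e.injective.extend_apply]
    · intro j _ hj
      exact Function.extend_apply' _ _ _ fun ⟨i, hi⟩ => hj (by simp [← hi])
  have extend_apply : ∀ (x : κ → α) (j : κ),
      Function.extend e (fun i => f i (x (e i))) 1 j = Function.extend e f 1 j (x j) := by
    intro x j
    by_cases hj : ∃ i, e i = j
    · obtain ⟨i, rfl⟩ := hj
      simp only [e.injective.extend_apply]
    · simp only [Function.extend_apply' _ _ _ hj, Pi.one_apply]
  simp only [prod_extend, extend_apply]
  rw [expect_prod_univ]
  refine prod_congr rfl fun j _ => ?_
  by_cases hj : ∃ i, e i = j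
  · obtain ⟨i, rfl⟩ := hj
    simp only [e.injective.extend_apply]
  · simp only [Function.extend_apply' _ _ _ hj, Pi.one_apply, Fintype.expect_const]

lemma expect_eq_expect_update [Fintype ι] [DecidableEq ι] [Fintype α] [Nonempty α] (i : ι)
    (f : (ι → α) → ℝ) : 𝔼 x, f x = 𝔼 x, 𝔼 a, f (Function.update x i a) := by
  let swapCoordinate : Equiv.Perm ((ι → α) × α) :=
    Function.Involutive.toPerm (fun q => (Function.update q.1 i q.2, q.1 i)) fun q => by simp
  calc 𝔼 x, f x = 𝔼 q : (ι → α) × α, f q.1 := by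
        rw [← univ_product_univ, expect_product]
        simp only [Fintype.expect_const]
    _ = 𝔼 q : (ι → α) × α, f (Function.update q.1 i q.2) :=
        (Fintype.expect_equiv swapCoordinate _ _ fun _ => rfl).symm
    _ = 𝔼 x, 𝔼 a, f (Function.update x i a) := by
        rw [← univ_product_univ, expect_product]

lemma expect_integral [Fintype α] [MeasurableSpace β] (μ : Measure β) {f : α → β → ℝ}
    (hf : ∀ a, Integrable (f a) μ) : 𝔼 a, ∫ x, f a x ∂μ = ∫ x, 𝔼 a, f a x ∂μ := by
  simp only [Fintype.expect_eq_sum_div_card]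
  rw [integral_div, integral_finsetSum _ fun a _ => hf a]

end UniformProbability

section RandomPermutations

variable {α : Type*} [LinearOrder α]

lemma uniformProb_perm_isMin_congr {S : Finset α} {b c : α} (hb : b ∈ S) (hc : c ∈ S) :
    uniformProb (fun τ : Equiv.Perm α => ∀ a ∈ S, τ b ≤ τ a) =
      uniformProb fun τ : Equiv.Perm α => ∀ a ∈ S, τ c ≤ τ a := by
  have swap_mem : ∀ a ∈ S, Equiv.swap b c a ∈ S := fun a ha => by
    rw [Equiv.swap_apply_def]
    split_ifs <;> assumption
  rw [← uniformProb_comp_equiv (Equiv.mulRight (Equiv.swap b c)) fun τ => ∀ a ∈ S, τ c ≤ τ a]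
  congr! 2 with τ
  simp only [Equiv.coe_mulRight, Equiv.Perm.mul_apply, Equiv.swap_apply_right]
  exact ⟨fun h a ha => h _ (swap_mem a ha), fun h a ha => by simpa using h _ (swap_mem a ha)⟩

variable [Finite α]

lemma sum_uniformProb_perm_isMin {S : Finset α} (hS : S.Nonempty) :
    ∑ c ∈ S, uniformProb (fun τ : Equiv.Perm α => ∀ a ∈ S, τ c ≤ τ a) = 1 := by
  cases nonempty_fintype α
  simp only [uniformProb_eq_expect, ← expect_sum_comm]
  refine (expect_congr rfl fun τ _ => ?_).trans (Fintype.expect_const (1 : ℝ))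
  obtain ⟨m, hm, hmin⟩ := exists_min_image S τ hS
  rw [sum_eq_single_of_mem m hm, if_pos hmin]
  exact fun c hc hcm => if_neg fun h => hcm (τ.injective (le_antisymm (h m hm) (hmin c hc)))

lemma uniformProb_perm_forall_lt {b : α} {D : Finset α} (hb : b ∉ D) :
    uniformProb (fun τ : Equiv.Perm α => ∀ a ∈ D, τ b < τ a) = 1 / (#D + 1) := by
  have isMin_iff : ∀ τ : Equiv.Perm α, (∀ a ∈ D, τ b < τ a) ↔ ∀ a ∈ insert b D, τ b ≤ τ a := by
    intro τ
    simp only [forall_mem_insert, le_refl, true_and]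
    exact forall₂_congr fun a ha =>
      ⟨le_of_lt, fun h => h.lt_of_ne fun h' => hb (τ.injective h' ▸ ha)⟩
  have hsum := sum_uniformProb_perm_isMin (insert_nonempty b D)
  rw [sum_congr rfl fun c hc => uniformProb_perm_isMin_congr hc (mem_insert_self b D), sum_const,
    card_insert_of_notMem hb, nsmul_eq_mul] at hsum
  simp only [isMin_iff]
  rw [eq_div_iff (by positivity), mul_comm]
  exact_mod_cast hsum

end RandomPermutations

section Records

variable {n : ℕ}

/-- Position `i` is a record of `π` if its value is smaller than all earlier values. -/
def IsRecord (π : Equiv.Perm (Fin n)) (i : Fin n) : Prop := ∀ k < i, π i < π k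

instance (π : Equiv.Perm (Fin n)) : DecidablePred (IsRecord π) :=
  fun i => inferInstanceAs (Decidable (∀ k < i, π i < π k))

/-- The number of records of `π` at (zero-based) positions in `[k₁, k₂)`. -/
def recordCount (π : Equiv.Perm (Fin n)) (k₁ k₂ : ℕ) : ℕ :=
  #{i : Fin n | (k₁ ≤ i ∧ i < k₂) ∧ IsRecord π i}

/-- The permutation of `Fin (n + 1)` with last value `v` whose other values are in the same relative
order as those of `π`. -/
def appendValue (v : Fin (n + 1)) (π : Equiv.Perm (Fin n)) : Equiv.Perm (Fin (n + 1)) :=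
  finSuccEquivLast.trans (π.optionCongr.trans (finSuccEquiv' v).symm)

lemma appendValue_last (v : Fin (n + 1)) (π : Equiv.Perm (Fin n)) :
    appendValue v π (Fin.last n) = v := by
  simp [appendValue]

lemma appendValue_castSucc (v : Fin (n + 1)) (π : Equiv.Perm (Fin n)) (i : Fin n) :
    appendValue v π i.castSucc = v.succAbove (π i) := by
  simp [appendValue]

lemma bijective_appendValue :
    Function.Bijective fun q : Fin (n + 1) × Equiv.Perm (Fin n) => appendValue q.1 q.2 := by
  rw [Fintype.bijective_iff_injective_and_card]
  refine ⟨?_, by simp [Fintype.card_perm, Nat.factorial_succ]⟩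
  rintro ⟨v, π⟩ ⟨v', π'⟩ (h : appendValue v π = appendValue v' π')
  obtain rfl : v = v' := by
    simpa only [appendValue_last] using DFunLike.congr_fun h (Fin.last n)
  refine Prod.ext rfl (Equiv.ext fun i => ?_)
  apply Fin.succAbove_right_injective (p := v)
  simpa only [appendValue_castSucc] using DFunLike.congr_fun h i.castSucc

lemma isRecord_appendValue_castSucc (v : Fin (n + 1)) (π : Equiv.Perm (Fin n)) (i : Fin n) :
    IsRecord (appendValue v π) i.castSucc ↔ IsRecord π i := by
  simp only [IsRecord, Fin.forall_fin_succ', Fin.castSucc_lt_castSucc_iff, appendValue_castSucc,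
    Fin.succAbove_lt_succAbove_iff, (Fin.castSucc_lt_last i).not_gt, false_imp_iff, and_true]

lemma isRecord_appendValue_last (v : Fin (n + 1)) (π : Equiv.Perm (Fin n)) :
    IsRecord (appendValue v π) (Fin.last n) ↔ v = 0 := by
  constructor
  · intro h
    obtain ⟨k, hk⟩ := (appendValue v π).surjective 0
    rcases (Fin.le_last k).eq_or_lt with rfl | hlt
    · rw [← hk, appendValue_last]
    · exact absurd (hk ▸ h k hlt) (Fin.not_lt_zero _)
  · rintro rfl k hk
    rw [appendValue_last, Fin.pos_iff_ne_zero]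
    intro h0
    exact hk.ne ((appendValue 0 π).injective (h0.trans (appendValue_last 0 π).symm))

lemma expect_ite_eq_zero (x : ℝ) :
    𝔼 v : Fin (n + 1), (if v = 0 then x else 1) = 1 + (x - 1) / (n + 1) := by
  rw [Fintype.expect_eq_sum_div_card, Fin.sum_univ_succ]
  simp only [if_true, Fin.succ_ne_zero, if_false, sum_const, card_univ, Fintype.card_fin,
    nsmul_eq_mul, mul_one, Nat.cast_add, Nat.cast_one]
  field_simp
  ring

lemma expect_prod_isRecord (n : ℕ) (z : ℕ → ℝ) :
    𝔼 π : Equiv.Perm (Fin n), ∏ i, (if IsRecord π i then z i else 1) =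
      ∏ i ∈ range n, (1 + (z i - 1) / (i + 1)) := by
  induction n with
  | zero => simp
  | succ n ih =>
    rw [← Fintype.expect_equiv (Equiv.ofBijective _ bijective_appendValue) _ _ fun _ => rfl,
      ← univ_product_univ, expect_product, prod_range_succ, ← ih, mul_comm, ← expect_ite_eq_zero,
      expect_mul]
    refine expect_congr rfl fun v _ => ?_
    rw [mul_expect]
    refine expect_congr rfl fun π _ => ?_
    rw [Fin.prod_univ_castSucc, mul_comm]
    simp only [Equiv.ofBijective_apply, isRecord_appendValue_castSucc, isRecord_appendValue_last,
      Fin.val_last, Fin.val_castSucc]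

lemma pow_recordCount (π : Equiv.Perm (Fin n)) (k₁ k₂ : ℕ) (w : ℝ) :
    w ^ recordCount π k₁ k₂ =
      ∏ i : Fin n, if IsRecord π i then (if k₁ ≤ i ∧ i < k₂ then w else 1) else 1 := by
  rw [recordCount, ← prod_const, prod_filter]
  refine prod_congr rfl fun i _ => ?_
  simp only [← ite_and, and_comm]

lemma expect_pow_recordCount {k₁ k₂ : ℕ} (hk₂ : k₂ ≤ n) (w : ℝ) :
    𝔼 π : Equiv.Perm (Fin n), w ^ recordCount π k₁ k₂ =
      ∏ i ∈ Ico k₁ k₂, (1 + (w - 1) / (i + 1)) := by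
  simp only [pow_recordCount]
  rw [expect_prod_isRecord n fun i => if k₁ ≤ i ∧ i < k₂ then w else 1]
  refine (prod_subset_one_on_sdiff (fun i hi => ?_) (fun i hi => ?_) fun i hi => ?_).symm
  · exact mem_range.2 ((mem_Ico.1 hi).2.trans_le hk₂)
  · rw [if_neg fun h => (mem_sdiff.1 hi).2 (mem_Ico.2 h)]
    simp
  · rw [if_pos (mem_Ico.1 hi)]

lemma prod_one_add_div_le_exp_sum (s : Finset ℕ) {u : ℝ} (hu : -1 ≤ u) :
    ∏ i ∈ s, (1 + u / (i + 1)) ≤ Real.exp (u * ∑ i ∈ s, 1 / ((i : ℝ) + 1)) := by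
  rw [mul_sum, Real.exp_sum]
  refine prod_le_prod (fun i _ => ?_) fun i _ => ?_
  · have : -1 ≤ u / ((i : ℝ) + 1) := by
      rw [le_div_iff₀ (by positivity)]
      linarith [(Nat.cast_nonneg i : (0 : ℝ) ≤ i)]
    linarith
  · rw [mul_one_div, add_comm]
    exact Real.add_one_le_exp _

lemma log_sub_log_le_sum_Ico {k₁ k₂ : ℕ} (hk : k₁ ≤ k₂) :
    Real.log (k₂ + 1) - Real.log (k₁ + 1) ≤ ∑ i ∈ Ico k₁ k₂, 1 / ((i : ℝ) + 1) := by
  rw [← sum_Ico_sub (fun i : ℕ => Real.log (i + 1)) hk]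
  refine sum_le_sum fun i _ => ?_
  rw [← Real.log_div (by positivity) (by positivity)]
  refine (Real.log_le_sub_one_of_pos (by positivity)).trans (le_of_eq ?_)
  push_cast
  field_simp
  ring

lemma uniformProb_lt_recordCount_le (hn : n ≠ 0) {w : ℝ} (hw : 1 ≤ w) (x : ℝ) :
    uniformProb (fun π : Equiv.Perm (Fin n) => x < recordCount π 0 n) ≤
      w ^ (-x) * (Real.exp 1 * n) ^ (w - 1) := by
  have hw0 : 0 < w := by linarith
  calc uniformProb (fun π : Equiv.Perm (Fin n) => x < recordCount π 0 n)
      ≤ 𝔼 π : Equiv.Perm (Fin n), w ^ (-x) * w ^ recordCount π 0 n := by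
        refine uniformProb_le_expect (fun π => by positivity) fun π hπ => ?_
        rw [← Real.rpow_natCast, ← Real.rpow_add hw0]
        exact Real.one_le_rpow hw (by linarith)
    _ = w ^ (-x) * ∏ i ∈ Ico 0 n, (1 + (w - 1) / (i + 1)) := by
        rw [← mul_expect, expect_pow_recordCount le_rfl]
    _ ≤ w ^ (-x) * (Real.exp 1 * n) ^ (w - 1) := by
        gcongr
        refine (prod_one_add_div_le_exp_sum _ (by linarith)).trans ?_
        have harmonic_le : ∑ i ∈ Ico 0 n, 1 / ((i : ℝ) + 1) ≤ 1 + Real.log n := by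
          simpa [harmonic] using harmonic_le_one_add_log n
        rw [Real.rpow_def_of_pos (by positivity), Real.log_mul (by positivity) (by positivity),
          Real.log_exp, mul_comm]
        gcongr

lemma uniformProb_recordCount_lt_le {k₁ k₂ : ℕ} (hk : k₁ ≤ k₂) (hk₂ : k₂ ≤ n) {w : ℝ}
    (hw0 : 0 < w) (hw1 : w ≤ 1) (x : ℝ) :
    uniformProb (fun π : Equiv.Perm (Fin n) => recordCount π k₁ k₂ < x) ≤
      w ^ (-x) * (((k₁ : ℝ) + 1) / (k₂ + 1)) ^ (1 - w) := by
  calc uniformProb (fun π : Equiv.Perm (Fin n) => recordCount π k₁ k₂ < x)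
      ≤ 𝔼 π : Equiv.Perm (Fin n), w ^ (-x) * w ^ recordCount π k₁ k₂ := by
        refine uniformProb_le_expect (fun π => by positivity) fun π hπ => ?_
        rw [← Real.rpow_natCast, ← Real.rpow_add hw0]
        exact Real.one_le_rpow_of_pos_of_le_one_of_nonpos hw0 hw1 (by linarith)
    _ = w ^ (-x) * ∏ i ∈ Ico k₁ k₂, (1 + (w - 1) / (i + 1)) := by
        rw [← mul_expect, expect_pow_recordCount hk₂]
    _ ≤ w ^ (-x) * (((k₁ : ℝ) + 1) / (k₂ + 1)) ^ (1 - w) := by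
        gcongr
        refine (prod_one_add_div_le_exp_sum _ (by linarith)).trans ?_
        rw [Real.rpow_def_of_pos (by positivity), Real.log_div (by positivity) (by positivity)]
        have weighted := mul_le_mul_of_nonneg_left (log_sub_log_le_sum_Ico hk) (sub_nonneg.2 hw1)
        exact Real.exp_le_exp.2 (by linarith)

end Records

section Resampling

variable {n : ℕ}

/-- The profile `P` with the ranking of girl `z` replaced by `s`. -/
def withRanking (P : PrefProfile n) (z : Fin n) (s : Equiv.Perm (Fin n)) : PrefProfile n :=
  (Function.update P.1 z s, P.2)

lemma girlPrefers_withRanking_self (P : PrefProfile n) (z : Fin n) (s : Equiv.Perm (Fin n))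
    (b b' : Fin n) : GirlPrefers (withRanking P z s) z b b' ↔ s b < s b' := by
  simp only [GirlPrefers, withRanking, Function.update_self]

lemma girlPrefers_withRanking_of_ne (P : PrefProfile n) {z g : Fin n} (hg : g ≠ z)
    (s : Equiv.Perm (Fin n)) (b b' : Fin n) :
    GirlPrefers (withRanking P z s) g b b' ↔ GirlPrefers P g b b' := by
  simp only [GirlPrefers, withRanking, Function.update_of_ne hg]

lemma expect_eq_expect_withRanking (z : Fin n) (f : PrefProfile n → ℝ) :
    𝔼 P, f P = 𝔼 P, 𝔼 s, f (withRanking P z s) := by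
  rw [← univ_product_univ, expect_product, expect_product, expect_comm]
  refine (expect_congr rfl fun B _ => ?_).trans (expect_comm _ _ _)
  exact expect_eq_expect_update z fun G => f (G, B)

lemma uniformProb_le_add_of_forall_withRanking (z : Fin n) {p bad : PrefProfile n → Prop} {δ : ℝ}
    (hδ : 0 ≤ δ) (h : ∀ P, ¬bad P → uniformProb (fun s => p (withRanking P z s)) ≤ δ) :
    uniformProb p ≤ uniformProb bad + δ := by
  classical
  rw [uniformProb_eq_expect p, expect_eq_expect_withRanking z]
  simp only [← uniformProb_eq_expect]
  calc 𝔼 P, uniformProb (fun s => p (withRanking P z s))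
      ≤ 𝔼 P : PrefProfile n, ((if bad P then (1 : ℝ) else 0) + δ) := by
        refine expect_le_expect fun P _ => ?_
        split_ifs with hP
        · exact (uniformProb_le_one _).trans (by linarith)
        · linarith [h P hP]
    _ = uniformProb bad + δ := by
        rw [expect_add_distrib, Fintype.expect_const, uniformProb_eq_expect]

end Resampling

section RejectionProcess

variable {n : ℕ} {P : PrefProfile n} {z : Fin n} {p : Fin n → ℕ} {t : List (Fin n)}

/-- In a state `p`, each boy `a` has been rejected by the first `p a` girls of his list and proposes
to the next one, if there is one. -/
def Proposes (P : PrefProfile n) (p : Fin n → ℕ) (a j : Fin n) : Prop := (P.2 a j : ℕ) = p a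

/-- In the state `p`, boy `a` has already been rejected by girl `j`. -/
def Rejected (P : PrefProfile n) (p : Fin n → ℕ) (a j : Fin n) : Prop := (P.2 a j : ℕ) < p a

/-- The state after boy `a` has been rejected once more. -/
def advance (p : Fin n → ℕ) (a : Fin n) : Fin n → ℕ := Function.update p a (p a + 1)

/-- `RejectionRun z P p t`: the proposal process in which girl `z` rejects every proposal, and any
other girl rejects a proposer only when she has a better one, can reach the state `p` after `z` has
rejected the boys of `t`, in this order. -/
inductive RejectionRun (z : Fin n) (P : PrefProfile n) : (Fin n → ℕ) → List (Fin n) → Prop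
  | start : RejectionRun z P 0 []
  | reject {p : Fin n → ℕ} {t : List (Fin n)} {a a' j : Fin n} (h : RejectionRun z P p t)
      (hj : j ≠ z) (ha : Proposes P p a j) (ha' : Proposes P p a' j) (hlt : GirlPrefers P j a' a) :
      RejectionRun z P (advance p a) t
  | refuse {p : Fin n → ℕ} {t : List (Fin n)} {b : Fin n} (h : RejectionRun z P p t)
      (hb : Proposes P p b z) : RejectionRun z P (advance p b) (t ++ [b])

lemma Proposes.eq {a i j : Fin n} (hi : Proposes P p a i) (hj : Proposes P p a j) : i = j :=
  (P.2 a).injective (Fin.ext (hi.trans hj.symm))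

lemma Proposes.advance {a b j : Fin n} (h : Proposes P p a j) (hab : a ≠ b) :
    Proposes P (advance p b) a j := by
  rwa [Proposes, _root_.advance, Function.update_of_ne hab]

lemma rejected_advance_iff {a b j : Fin n} :
    Rejected P (advance p b) a j ↔ Rejected P p a j ∨ a = b ∧ Proposes P p b j := by
  by_cases hab : a = b
  · subst hab
    simp [Rejected, Proposes, advance, le_iff_lt_or_eq]
  · simp [Rejected, advance, hab]

lemma sum_sub_advance_lt {a : Fin n} (ha : p a < n) :
    ∑ c, (n - advance p a c) < ∑ c, (n - p c) := by
  refine sum_lt_sum (fun c _ => ?_) ⟨a, mem_univ a, ?_⟩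
  · by_cases hc : c = a
    · subst hc
      simp only [advance, Function.update_self]
      omega
    · simp [advance, hc]
  · simp only [advance, Function.update_self]
    omega

lemma exists_forall_proposes (hp : ∀ a, p a < n) :
    ∃ target : Fin n → Fin n, ∀ a, Proposes P p a (target a) :=
  ⟨fun a => (P.2 a).symm ⟨p a, hp a⟩, fun a => by simp [Proposes]⟩

namespace RejectionRun

lemma exists_better_proposer (h : RejectionRun z P p t) {a j : Fin n} (hj : j ≠ z)
    (ha : Rejected P p a j) : ∃ a', Proposes P p a' j ∧ GirlPrefers P j a' a := by
  induction h generalizing a j with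
  | start => exact absurd ha (Nat.not_lt_zero _)
  | @reject p _ b b' i _ hi hb hb' hlt ih =>
    have hbb' : b' ≠ b := by
      rintro rfl
      exact lt_irrefl _ hlt
    rcases rejected_advance_iff.1 ha with ha | ⟨rfl, hpj⟩
    · obtain ⟨x, hx, hxa⟩ := ih hj ha
      by_cases hxb : x = b
      · subst hxb
        obtain rfl := hx.eq hb
        exact ⟨b', hb'.advance hbb', lt_trans hlt hxa⟩
      · exact ⟨x, hx.advance hxb, hxa⟩
    · obtain rfl := hpj.eq hb
      exact ⟨b', hb'.advance hbb', hlt⟩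
  | refuse _ hb ih =>
    rcases rejected_advance_iff.1 ha with ha | ⟨rfl, hpj⟩
    · obtain ⟨x, hx, hxa⟩ := ih hj ha
      refine ⟨x, hx.advance ?_, hxa⟩
      rintro rfl
      exact hj (hx.eq hb)
    · exact absurd (hpj.eq hb) hj

lemma mem_iff_rejected (h : RejectionRun z P p t) {a : Fin n} : a ∈ t ↔ Rejected P p a z := by
  induction h with
  | start => simp [Rejected]
  | reject _ hj ha _ _ ih =>
    rw [ih, rejected_advance_iff, or_iff_left]
    exact fun hz => hj (ha.eq hz.2)
  | refuse _ hb ih => rw [List.mem_append, List.mem_singleton, ih, rejected_advance_iff,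
      and_iff_left hb]

lemma nodup (h : RejectionRun z P p t) : t.Nodup := by
  induction h with
  | start => exact List.nodup_nil
  | reject _ _ _ _ _ ih => exact ih
  | refuse h hb ih =>
    rw [← List.concat_eq_append, List.nodup_concat]
    exact ⟨fun hmem => (h.mem_iff_rejected.1 hmem).ne hb, ih⟩

end RejectionRun

/-- The boy `b` occurs in `t` right after the initial segment `l`, and `s` ranks `b` ahead of all of
`l`. -/
def IsRecordAfter (s : Equiv.Perm (Fin n)) (t l : List (Fin n)) (b : Fin n) : Prop :=
  l ++ [b] <+: t ∧ ∀ a ∈ l, s b < s a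

lemma boyPrefers_symm_of_le {M : Equiv.Perm (Fin n)} (hM : ∀ g, ¬Rejected P p (M g) g)
    {a j : Fin n} (hle : (P.2 a j : ℕ) ≤ p a) (hne : a ≠ M j) : BoyPrefers P a j (M.symm a) := by
  refine lt_of_le_of_ne ?_ fun h => hne (by simp [(P.2 a).injective h])
  have := hM (M.symm a)
  rw [M.apply_symm_apply, Rejected, not_lt] at this
  exact Fin.le_def.2 (hle.trans this)

lemma RejectionRun.not_rejected_or_exists_isRecordAfter (h : RejectionRun z P p t)
    {s M : Equiv.Perm (Fin n)} (hM : IsStableMatching (withRanking P z s) M) :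
    (∀ g, ¬Rejected P p (M g) g) ∨ ∃ l, IsRecordAfter s t l (M z) := by
  induction h with
  | start => exact Or.inl fun g => Nat.not_lt_zero _
  | @reject p t a a' j _ hj ha ha' hlt ih =>
    refine ih.imp_left fun hfree g hg => ?_
    obtain ⟨hMg, hag⟩ := (rejected_advance_iff.1 hg).resolve_left (hfree g)
    obtain rfl := hag.eq ha
    have hne : a' ≠ M g := by
      rintro rfl
      exact lt_irrefl _ (hMg ▸ hlt)
    refine hM ⟨g, a', hne, ?_, boyPrefers_symm_of_le hfree ha'.le hne⟩
    rwa [girlPrefers_withRanking_of_ne P hj, hMg]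
  | @refuse p t b h hb ih =>
    rcases ih with hfree | ⟨l, hl, hlt⟩
    · by_cases hbM : b = M z
      · subst hbM
        refine Or.inr ⟨t, List.prefix_rfl, fun a ha => ?_⟩
        have haz := h.mem_iff_rejected.1 ha
        have hne : a ≠ M z := fun hab => hfree z (hab ▸ haz)
        by_contra hle
        refine hM ⟨z, a, hne, ?_, boyPrefers_symm_of_le hfree haz.le hne⟩
        rw [girlPrefers_withRanking_self]
        exact (not_lt.1 hle).lt_of_ne fun hs => hne (s.injective hs)
      · refine Or.inl fun g hg => ?_
        obtain ⟨hMg, hbg⟩ := (rejected_advance_iff.1 hg).resolve_left (hfree g)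
        exact hbM (by rw [← hMg, hbg.eq hb])
    · exact Or.inr ⟨l, hl.trans (List.prefix_append _ _), hlt⟩

lemma RejectionRun.isStableMatching_withRanking (h : RejectionRun z P p t)
    {s M : Equiv.Perm (Fin n)} (hM : ∀ g, Proposes P p (M g) g) (hs : ∀ a ∈ t, s (M z) < s a) :
    IsStableMatching (withRanking P z s) M := by
  have hMsymm : ∀ a, Proposes P p a (M.symm a) := fun a => by simpa using hM (M.symm a)
  rintro ⟨g, a, -, hg, ha⟩
  have hrej : Rejected P p a g := lt_of_lt_of_eq (Fin.lt_def.1 ha) (hMsymm a)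
  by_cases hgz : g = z
  · subst hgz
    rw [girlPrefers_withRanking_self] at hg
    exact lt_asymm hg (hs a (h.mem_iff_rejected.2 hrej))
  · rw [girlPrefers_withRanking_of_ne P hgz] at hg
    obtain ⟨a', ha'g, ha'a⟩ := h.exists_better_proposer hgz hrej
    obtain rfl : M g = a' := by rw [ha'g.eq (hMsymm a'), M.apply_symm_apply]
    exact lt_asymm hg ha'a

/-- From position `k` of `t` on, every record of `t` is a stable husband of `z`, whatever the
ranking `s` of `z`. -/
def RealizesRecords (z : Fin n) (P : PrefProfile n) (k : ℕ) (t : List (Fin n)) : Prop :=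
  ∀ s l b, k ≤ l.length → IsRecordAfter s t l b →
    ∃ M : Fin n ≃ Fin n, IsStableMatching (withRanking P z s) M ∧ M z = b

lemma realizesRecords_length (z : Fin n) (P : PrefProfile n) (t : List (Fin n)) :
    RealizesRecords z P t.length t := by
  rintro s l b hl ⟨hpre, -⟩
  have := hpre.length_le
  rw [List.length_append, List.length_singleton] at this
  omega

lemma RealizesRecords.append {k : ℕ} (ht : RealizesRecords z P k t) (h : RejectionRun z P p t)
    {M : Equiv.Perm (Fin n)} (hM : ∀ g, Proposes P p (M g) g) :
    RealizesRecords z P k (t ++ [M z]) := by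
  rintro s l b hl ⟨hpre, hs⟩
  rcases List.prefix_concat_iff.1 hpre with heq | hpre
  · obtain ⟨rfl, hb⟩ := List.append_inj' heq rfl
    obtain rfl := List.singleton_inj.1 hb
    exact ⟨M, h.isStableMatching_withRanking hM hs, rfl⟩
  · exact ht s l b hl ⟨hpre, hs⟩

/-- Every girl other than `z` has a proposer. -/
def Occupied (z : Fin n) (P : PrefProfile n) (p : Fin n → ℕ) : Prop :=
  ∀ j, j ≠ z → ∃ a, Proposes P p a j

lemma Occupied.advance (ho : Occupied z P p) {b b' i : Fin n} (hb : Proposes P p b i)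
    (hb' : Proposes P p b' i) (hne : b' ≠ b) : Occupied z P (advance p b) := by
  intro j hj
  obtain ⟨a, ha⟩ := ho j hj
  by_cases hab : a = b
  · subst hab
    exact ⟨b', (hb.eq ha ▸ hb').advance hne⟩
  · exact ⟨a, ha.advance hab⟩

lemma RejectionRun.exists_reject (h : RejectionRun z P p t) {a a' j : Fin n} (hj : j ≠ z)
    (hne : a ≠ a') (ha : Proposes P p a j) (ha' : Proposes P p a' j) :
    ∃ b b', b' ≠ b ∧ Proposes P p b j ∧ Proposes P p b' j ∧ RejectionRun z P (advance p b) t := by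
  rcases lt_or_gt_of_ne fun heq => hne ((P.1 j).injective heq) with hlt | hlt
  · exact ⟨a', a, hne, ha', ha, h.reject hj ha' ha hlt⟩
  · exact ⟨a, a', hne.symm, ha, ha', h.reject hj ha ha' hlt⟩

lemma RejectionRun.exists_advance (h : RejectionRun z P p t) {g : Fin n}
    (hg : ∀ a, ¬Proposes P p a g) (hp : ∀ a, p a < n) :
    ∃ b t', RejectionRun z P (advance p b) t' := by
  obtain ⟨target, htarget⟩ := exists_forall_proposes (P := P) hp
  have not_injective : ¬Function.Injective target := fun hinj => by
    obtain ⟨a, rfl⟩ := Finite.surjective_of_injective hinj g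
    exact hg a (htarget a)
  obtain ⟨a, a', heq, hne⟩ := Function.not_injective_iff.1 not_injective
  by_cases hz : target a = z
  · exact ⟨a, _, h.refuse (hz ▸ htarget a)⟩
  · obtain ⟨b, -, -, -, -, hrun⟩ := h.exists_reject hz hne (htarget a) (heq ▸ htarget a')
    exact ⟨b, t, hrun⟩

lemma RejectionRun.exists_occupied (h : RejectionRun z P p t) {g : Fin n} (hg : g ≠ z)
    (hgp : ∀ a, ¬Rejected P p a g) :
    ∃ p' t', RejectionRun z P p' t' ∧ Occupied z P p' ∧
      ∃ g ≠ z, ∀ a, ¬Rejected P p' a g := by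
  induction hk : ∑ c, (n - p c) using Nat.strong_induction_on generalizing p t g with
  | _ k ih =>
  subst hk
  by_cases ho : Occupied z P p
  · exact ⟨p, t, h, ho, g, hg, hgp⟩
  obtain ⟨g', hg', hfree⟩ : ∃ g', g' ≠ z ∧ ∀ a, ¬Proposes P p a g' := by
    simpa only [Occupied, not_forall, not_exists, exists_prop] using ho
  have not_rejected : ∀ a, ¬Rejected P p a g' := fun a ha => by
    obtain ⟨a', ha', -⟩ := h.exists_better_proposer hg' ha
    exact hfree a' ha'
  have hp : ∀ a, p a < n := fun a => (not_lt.1 (not_rejected a)).trans_lt (P.2 a g').isLt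
  obtain ⟨b, t', hrun⟩ := h.exists_advance hfree hp
  refine ih _ (sum_sub_advance_lt (hp b)) hrun hg' (fun a ha => ?_) rfl
  exact (rejected_advance_iff.1 ha).elim (not_rejected a) fun hb => hfree b hb.2

lemma RejectionRun.exists_advance_of_occupied (h : RejectionRun z P p t) (ho : Occupied z P p)
    {k : ℕ} (ht : RealizesRecords z P k t) (hp : ∀ a, p a < n) :
    ∃ b t', RejectionRun z P (advance p b) t' ∧ Occupied z P (advance p b) ∧
      RealizesRecords z P k t' := by
  obtain ⟨target, htarget⟩ := exists_forall_proposes (P := P) hp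
  by_cases hinj : Function.Injective target
  · let M := (Equiv.ofBijective target (Finite.injective_iff_bijective.1 hinj)).symm
    have hM : ∀ g, Proposes P p (M g) g := fun g => by
      simpa only [M, Equiv.ofBijective_apply_symm_apply] using htarget (M g)
    exact ⟨M z, t ++ [M z], h.refuse (hM z), fun j hj => ⟨M j, (hM j).advance (M.injective.ne hj)⟩,
      ht.append h hM⟩
  · obtain ⟨a, a', heq, hne⟩ := Function.not_injective_iff.1 hinj
    have hz : target a ≠ z := fun hz => hinj <| Finite.injective_iff_surjective.2 fun j => by
      by_cases hj : j = z
      · exact ⟨a, hz.trans hj.symm⟩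
      · obtain ⟨c, hc⟩ := ho j hj
        exact ⟨c, (htarget c).eq hc⟩
    obtain ⟨b, b', hbb', hb, hb', hrun⟩ :=
      h.exists_reject hz hne (htarget a) (heq ▸ htarget a')
    exact ⟨b, t, hrun, ho.advance hb hb' hbb', ht⟩

lemma RejectionRun.exists_exhausted (h : RejectionRun z P p t) (ho : Occupied z P p) {k : ℕ}
    (ht : RealizesRecords z P k t) :
    ∃ p' t', RejectionRun z P p' t' ∧ Occupied z P p' ∧ RealizesRecords z P k t' ∧
      ∃ b, n ≤ p' b := by
  induction hk : ∑ c, (n - p c) using Nat.strong_induction_on generalizing p t with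
  | _ k ih =>
  subst hk
  by_cases hp : ∃ b, n ≤ p b
  · exact ⟨p, t, h, ho, ht, hp⟩
  push Not at hp
  obtain ⟨b, t', hrun, ho', ht'⟩ := h.exists_advance_of_occupied ho ht hp
  exact ih _ (sum_sub_advance_lt (hp b)) hrun ho' ht' rfl

end RejectionProcess

section Configurations

lemma exists_perm_extending {α : Type*} [Finite α] {f : α → α} {s : Set α} (hf : s.InjOn f) :
    ∃ e : Equiv.Perm α, ∀ i ∈ s, e i = f i := by
  classical
  cases nonempty_fintype α
  obtain ⟨e, he⟩ := Set.MapsTo.exists_equiv_extend_of_card_eq (t := univ) (by simp)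
    (fun _ _ => mem_coe.2 (mem_univ _)) hf
  exact ⟨e.trans (Equiv.subtypeUnivEquiv mem_univ), he⟩

variable {n : ℕ} {P : PrefProfile n} {z : Fin n} {p : Fin n → ℕ} {t : List (Fin n)}

/-- No pair `(j, M i)` with `i, j ≠ z` blocks `M`. -/
def StableOff (z : Fin n) (P : PrefProfile n) (M : Equiv.Perm (Fin n)) : Prop :=
  ∀ i j, i ≠ z → j ≠ z → BoyPrefers P (M i) j i → GirlPrefers P j (M j) (M i)

/-- The number of boys matched by `M` to a girl other than `z` who prefer `z` to their partner. -/
def suitorCount (z : Fin n) (P : PrefProfile n) (M : Equiv.Perm (Fin n)) : ℕ :=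
  #{i | i ≠ z ∧ P.2 (M i) z < P.2 (M i) i}

/-- The configuration left when the last girl `g ≠ z` receives her first proposal, `z` having
received at least `k` proposals, one of which may come from `M z`. -/
structure EarlyConfiguration (z : Fin n) (P : PrefProfile n) (M : Equiv.Perm (Fin n)) (g : Fin n)
    (k : ℕ) : Prop where
  ne : g ≠ z
  stableOff : StableOff z P M
  not_boyPrefers : ∀ i, i ≠ z → ¬BoyPrefers P (M i) g i
  le_suitorCount : k ≤ suitorCount z P M + 1

/-- The configuration left when the boy `M z` has been rejected by all girls, `z` having received at
most `k` proposals from the other boys. -/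
structure LateConfiguration (z : Fin n) (P : PrefProfile n) (M : Equiv.Perm (Fin n)) (k : ℕ) :
    Prop where
  stableOff : StableOff z P M
  girlPrefers : ∀ j, j ≠ z → GirlPrefers P j (M j) (M z)
  suitorCount_le : suitorCount z P M ≤ k

/-- `M` gives every girl `j ≠ z` a proposer whom she prefers to all the boys she has rejected. -/
structure IsHeldMatching (z : Fin n) (P : PrefProfile n) (p : Fin n → ℕ) (M : Equiv.Perm (Fin n)) :
    Prop where
  proposes : ∀ j, j ≠ z → Proposes P p (M j) j
  girlPrefers : ∀ j, j ≠ z → ∀ a, Rejected P p a j → GirlPrefers P j (M j) a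

lemma RejectionRun.exists_isHeldMatching (h : RejectionRun z P p t) (ho : Occupied z P p) :
    ∃ M, IsHeldMatching z P p M := by
  have exists_best : ∀ j, j ≠ z → ∃ a, Proposes P p a j ∧
      ∀ a', Proposes P p a' j → P.1 j a ≤ P.1 j a' := fun j hj =>
    Set.exists_min_image {a | Proposes P p a j} (P.1 j) (Set.toFinite _) (ho j hj)
  choose! best hbest hmin using exists_best
  obtain ⟨M, hM⟩ := exists_perm_extending (f := best) (s := {z}ᶜ)
    fun i hi j hj hij => (hbest i hi).eq (hij ▸ hbest j hj)
  refine ⟨M, fun j hj => hM j hj ▸ hbest j hj, fun j hj a ha => ?_⟩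
  obtain ⟨a', ha', hlt⟩ := h.exists_better_proposer hj ha
  exact hM j hj ▸ lt_of_le_of_lt (hmin j hj a' ha') hlt

namespace IsHeldMatching

variable {M : Equiv.Perm (Fin n)}

lemma boyPrefers_iff (hM : IsHeldMatching z P p M) {i : Fin n} (hi : i ≠ z) (j : Fin n) :
    BoyPrefers P (M i) j i ↔ Rejected P p (M i) j := by
  rw [BoyPrefers, Fin.lt_def, hM.proposes i hi, Rejected]

lemma stableOff (hM : IsHeldMatching z P p M) : StableOff z P M := fun i j hi hj hij =>
  hM.girlPrefers j hj (M i) ((hM.boyPrefers_iff hi j).1 hij)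

lemma suitorCount_eq (hM : IsHeldMatching z P p M) (h : RejectionRun z P p t) :
    suitorCount z P M = #(t.toFinset.erase (M z)) := by
  rw [suitorCount, ← card_map M.toEmbedding]
  congr 1
  ext a
  obtain ⟨i, rfl⟩ := M.surjective a
  simp only [mem_map_equiv, Equiv.symm_apply_apply, mem_filter, mem_univ, true_and, mem_erase,
    List.mem_toFinset, M.injective.ne_iff]
  exact and_congr_right fun hi => (hM.boyPrefers_iff hi z).trans h.mem_iff_rejected.symm

lemma earlyConfiguration (hM : IsHeldMatching z P p M) (h : RejectionRun z P p t) {g : Fin n}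
    (hg : g ≠ z) (hgp : ∀ a, ¬Rejected P p a g) : EarlyConfiguration z P M g t.length where
  ne := hg
  stableOff := hM.stableOff
  not_boyPrefers i hi := by
    rw [hM.boyPrefers_iff hi]
    exact hgp _
  le_suitorCount := by
    rw [hM.suitorCount_eq h, ← List.toFinset_card_of_nodup h.nodup]
    exact Nat.le_add_of_sub_le pred_card_le_card_erase

lemma lateConfiguration (hM : IsHeldMatching z P p M) (h : RejectionRun z P p t) {b : Fin n}
    (hb : n ≤ p b) : LateConfiguration z P M t.length where
  stableOff := hM.stableOff
  girlPrefers j hj := by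
    have hbz : M z = b := by
      by_contra hne
      have hz : M.symm b ≠ z := fun hz => hne (by rw [← hz, M.apply_symm_apply])
      have := hM.proposes _ hz
      rw [M.apply_symm_apply, Proposes] at this
      omega
    exact hM.girlPrefers j hj _ (hbz ▸ (P.2 b j).isLt.trans_le hb)
  suitorCount_le := by
    rw [hM.suitorCount_eq h, ← List.toFinset_card_of_nodup h.nodup]
    exact card_erase_le

end IsHeldMatching

end Configurations

section Sandwich

variable {n : ℕ} {P : PrefProfile n} {z : Fin n} {t : List (Fin n)}

lemma exists_perm_apply_eq_getElem (ht : t.Nodup) :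
    ∃ e : Equiv.Perm (Fin n), ∀ (i : Fin n) (hi : i < t.length), e i = t[i] := by
  obtain ⟨e, he⟩ := exists_perm_extending (f := fun i : Fin n => t.getD i i)
    (s := {i : Fin n | (i : ℕ) < t.length}) fun i hi j hj hij => by
      simp only [List.getD_eq_getElem _ _ hi, List.getD_eq_getElem _ _ hj] at hij
      exact Fin.ext (ht.getElem_inj_iff.1 hij)
  exact ⟨e, fun i hi => (he i hi).trans (List.getD_eq_getElem _ _ hi)⟩

variable {e : Equiv.Perm (Fin n)}

lemma IsRecordAfter.exists_isRecord (he : ∀ (i : Fin n) (hi : i < t.length), e i = t[i])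
    (htn : t.length ≤ n) {s : Equiv.Perm (Fin n)} {l : List (Fin n)} {b : Fin n}
    (h : IsRecordAfter s t l b) : ∃ i, e i = b ∧ IsRecord (e.trans s) i := by
  obtain ⟨⟨r, rfl⟩, hlt⟩ := h
  have hl : l.length < (l ++ [b] ++ r).length := by simp
  have he_last : e ⟨l.length, hl.trans_le htn⟩ = b := by
    rw [he _ hl]
    simp
  refine ⟨⟨l.length, hl.trans_le htn⟩, he_last, fun k hk => ?_⟩
  have hkl : (k : ℕ) < l.length := hk
  rw [Equiv.trans_apply, Equiv.trans_apply, he_last, he k (hkl.trans hl)]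
  refine hlt _ ?_
  simp [List.getElem_append_left, hkl]

lemma IsRecord.isRecordAfter_take (he : ∀ (i : Fin n) (hi : i < t.length), e i = t[i])
    {s : Equiv.Perm (Fin n)} {i : Fin n} (hi : i < t.length) (h : IsRecord (e.trans s) i) :
    IsRecordAfter s t (t.take i) (e i) := by
  refine ⟨⟨t.drop (i + 1), ?_⟩, fun a ha => ?_⟩
  · simp [he i hi]
  · obtain ⟨k, hk, rfl⟩ := List.mem_take_iff_getElem.1 ha
    have hki : k < i := hk.trans_le (min_le_left _ _)
    have hek : e ⟨k, hki.trans i.isLt⟩ = t[k] := he _ (hki.trans hi)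
    exact hek ▸ h ⟨k, hki.trans i.isLt⟩ hki

end Sandwich

theorem exists_recordCount_sandwich {n : ℕ} (hn : 2 ≤ n) (P : PrefProfile n) (z : Fin n) :
    ∃ (e : Equiv.Perm (Fin n)) (k₁ k₂ : ℕ), (∃ M g, EarlyConfiguration z P M g k₁) ∧
      (∃ M, LateConfiguration z P M k₂) ∧
      ∀ s, recordCount (e.trans s) k₁ k₂ ≤ stableHusbandCount n (withRanking P z s) z ∧
        stableHusbandCount n (withRanking P z s) z ≤ recordCount (e.trans s) 0 n := by
  classical
  have : Nontrivial (Fin n) := Fin.nontrivial_iff_two_le.2 hn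
  obtain ⟨g₀, hg₀⟩ := exists_ne z
  obtain ⟨p₁, t₁, run₁, occ₁, g, hg, hgp⟩ :=
    (RejectionRun.start (P := P)).exists_occupied hg₀ fun _ => Nat.not_lt_zero _
  obtain ⟨p₂, t₂, run₂, occ₂, realizes, b, hb⟩ :=
    run₁.exists_exhausted occ₁ (realizesRecords_length z P t₁)
  obtain ⟨M₁, held₁⟩ := run₁.exists_isHeldMatching occ₁
  obtain ⟨M₂, held₂⟩ := run₂.exists_isHeldMatching occ₂
  obtain ⟨e, he⟩ := exists_perm_apply_eq_getElem run₂.nodup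
  have ht₂ : t₂.length ≤ n := by simpa using run₂.nodup.length_le_card
  refine ⟨e, t₁.length, t₂.length, ⟨M₁, g, held₁.earlyConfiguration run₁ hg hgp⟩,
    ⟨M₂, held₂.lateConfiguration run₂ hb⟩, fun s => ?_⟩
  rw [stableHusbandCount, Nat.card_eq_fintype_card, Fintype.card_subtype]
  constructor
  · rw [recordCount, ← card_map e.toEmbedding]
    refine card_le_card fun a ha => ?_
    obtain ⟨i, hi, rfl⟩ := mem_map.1 ha
    obtain ⟨⟨hi₁, hi₂⟩, hrec⟩ := (mem_filter.1 hi).2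
    refine mem_filter.2 ⟨mem_univ _, realizes s _ _ ?_ (hrec.isRecordAfter_take he hi₂)⟩
    rwa [List.length_take_of_le hi₂.le]
  · refine (card_le_card fun a ha => ?_).trans_eq (card_map e.toEmbedding)
    obtain ⟨M, hM, rfl⟩ := (mem_filter.1 ha).2
    obtain ⟨l, hl⟩ := (run₂.not_rejected_or_exists_isRecordAfter hM).resolve_left fun hfree => by
      have := hfree (M.symm b)
      rw [M.apply_symm_apply] at this
      exact this ((P.2 b _).isLt.trans_le hb)
    obtain ⟨i, hi, hrec⟩ := hl.exists_isRecord he ht₂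
    exact mem_map.2 ⟨i, mem_filter.2 ⟨mem_univ i, ⟨Nat.zero_le _, i.isLt⟩, hrec⟩, hi⟩

section UnitIntervalIntegrals

lemma integrable_of_continuous {X : Type*} [TopologicalSpace X] [CompactSpace X]
    [MeasurableSpace X] [OpensMeasurableSpace X] {μ : Measure X} [IsFiniteMeasure μ] {f : X → ℝ}
    (hf : Continuous f) : Integrable f μ :=
  hf.integrable_of_hasCompactSupport (HasCompactSupport.of_compactSpace f)

lemma integral_unitInterval (f : ℝ → ℝ) : ∫ x : I, f x = ∫ x in (0 : ℝ)..1, f x := by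
  rw [unitInterval.volume_def, integral_subtype_comap measurableSet_Icc,
    intervalIntegral.integral_of_le zero_le_one, integral_Icc_eq_integral_Ioc]

lemma integral_one_sub_pow (k : ℕ) : ∫ x : I, (1 - (x : ℝ)) ^ k = 1 / ((k : ℝ) + 1) := by
  rw [integral_unitInterval fun x => (1 - x) ^ k,
    intervalIntegral.integral_comp_sub_left (fun x => x ^ k)]
  simp

lemma integral_exp_neg_mul_le {c : ℝ} (hc : 0 ≤ c) :
    ∫ x : I, Real.exp (-(x : ℝ) * c) ≤ 1 / max 1 c := by
  rcases le_total c 1 with h | h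
  · rw [max_eq_left h]
    calc ∫ x : I, Real.exp (-(x : ℝ) * c) ≤ ∫ _x : I, (1 : ℝ) :=
          integral_mono (integrable_of_continuous (by fun_prop)) (by simp) fun x =>
            Real.exp_le_one_iff.2 (by nlinarith [x.2.1])
      _ = 1 / 1 := by simp
  · have hc0 : -c ≠ 0 := by linarith
    rw [max_eq_right h, integral_unitInterval fun x => Real.exp (-x * c)]
    simp only [neg_mul_comm]
    rw [intervalIntegral.integral_comp_mul_right Real.exp hc0, integral_exp, smul_eq_mul, zero_mul,
      one_mul, Real.exp_zero, inv_neg, neg_mul_comm, neg_sub, inv_mul_eq_div]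
    gcongr
    linarith [Real.exp_pos (-c)]

lemma integral_one_div_add_pow_le {A : ℝ} (hA : 0 < A) {k : ℕ} (hk : 1 ≤ k) :
    ∫ x : I, 1 / (A + (x : ℝ)) ^ (k + 1) ≤ 1 / (A ^ k * k) := by
  have hk0 : (0 : ℝ) < k := by exact_mod_cast hk
  have add_pos : ∀ x ∈ Set.uIcc (0 : ℝ) 1, 0 < A + x := fun x hx => by
    rw [Set.uIcc_of_le zero_le_one] at hx
    linarith [hx.1]
  have hderiv : ∀ x ∈ Set.uIcc (0 : ℝ) 1,
      HasDerivAt (fun x => -((A + x) ^ k * k)⁻¹) (1 / (A + x) ^ (k + 1)) x := by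
    intro x hx
    have hx0 := add_pos x hx
    refine (((((hasDerivAt_id' x).const_add A).pow k).mul_const (k : ℝ)).inv
      (mul_pos (pow_pos hx0 k) hk0).ne').neg.congr_deriv ?_
    obtain ⟨j, rfl⟩ : ∃ j, k = j + 1 := ⟨k - 1, by omega⟩
    simp only [Nat.add_sub_cancel, Pi.pow_apply]
    field_simp
    ring
  rw [integral_unitInterval fun x => 1 / (A + x) ^ (k + 1),
    intervalIntegral.integral_eq_sub_of_hasDerivAt hderiv, add_zero, one_div]
  · have : 0 < ((A + 1) ^ k * k)⁻¹ := by positivity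
    linarith
  · exact (ContinuousOn.div (by fun_prop) (by fun_prop) fun x hx =>
      (pow_pos (add_pos x hx) _).ne').intervalIntegrable

section Cube

variable {ι : Type*} [Fintype ι] {A : ℝ}

lemma sum_coe_nonneg (x : ι → I) : 0 ≤ ∑ i, (x i : ℝ) := sum_nonneg fun i _ => (x i).2.1

lemma sum_coe_le_card (x : ι → I) : ∑ i, (x i : ℝ) ≤ Fintype.card ι :=
  (sum_le_sum fun i _ => (x i).2.2).trans_eq (by simp)

lemma integrable_one_div_add_sum_pow (hA : 0 < A) (k : ℕ) :
    Integrable fun x : ι → I => 1 / (A + ∑ i, (x i : ℝ)) ^ k :=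
  integrable_of_continuous <| Continuous.div (by fun_prop) (by fun_prop) fun x =>
    (pow_pos (by linarith [sum_coe_nonneg x]) k).ne'

lemma integral_fin_succ_one_div_add_sum_pow (hA : 0 < A) (k m : ℕ) :
    ∫ x : Fin (k + 1) → I, 1 / (A + ∑ i, (x i : ℝ)) ^ m =
      ∫ y : Fin k → I, ∫ x : I, 1 / (A + ∑ i, (y i : ℝ) + x) ^ m := by
  have hcont : Continuous fun p : I × (Fin k → I) =>
      1 / (A + ∑ i, (p.2 i : ℝ) + p.1) ^ m :=
    Continuous.div (by fun_prop) (by fun_prop) fun p =>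
      (pow_pos (by linarith [sum_coe_nonneg p.2, p.1.2.1]) m).ne'
  calc ∫ x : Fin (k + 1) → I, 1 / (A + ∑ i, (x i : ℝ)) ^ m
      = ∫ p : I × (Fin k → I), 1 / (A + ∑ i, (p.2 i : ℝ) + p.1) ^ m := by
        rw [← (volume_preserving_piFinSuccAbove (fun _ : Fin (k + 1) => I) 0).integral_comp
          (MeasurableEquiv.measurableEmbedding _)]
        refine integral_congr_ae (.of_forall fun x => ?_)
        dsimp only
        rw [Fin.sum_univ_succ, add_comm (x 0 : ℝ), ← add_assoc]
        rfl
    _ = _ := integral_prod_symm _ (integrable_of_continuous hcont)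

lemma integral_fin_one_div_add_sum_pow_succ_le (hA : 0 < A) (k : ℕ) :
    ∫ x : Fin k → I, 1 / (A + ∑ i, (x i : ℝ)) ^ (k + 1) ≤ 1 / (A * k.factorial) := by
  induction k with
  | zero => simp
  | succ k ih =>
    calc ∫ x : Fin (k + 1) → I, 1 / (A + ∑ i, (x i : ℝ)) ^ (k + 1 + 1)
        = ∫ y : Fin k → I, ∫ x : I, 1 / (A + ∑ i, (y i : ℝ) + x) ^ (k + 1 + 1) :=
          integral_fin_succ_one_div_add_sum_pow hA k _
      _ ≤ ∫ y : Fin k → I, 1 / (A + ∑ i, (y i : ℝ)) ^ (k + 1) * (1 / (k + 1 : ℕ)) := by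
          refine integral_mono_of_nonneg (.of_forall fun y => integral_nonneg fun x => ?_)
            ((integrable_one_div_add_sum_pow hA _).mul_const _) (.of_forall fun y => ?_)
          · have := sum_coe_nonneg y
            have := x.2.1
            positivity
          · exact (integral_one_div_add_pow_le (by linarith [sum_coe_nonneg y])
              (Nat.le_add_left 1 k)).trans_eq (one_div_mul_one_div _ _).symm
      _ ≤ 1 / (A * k.factorial) * (1 / (k + 1 : ℕ)) := by
          rw [integral_mul_const]
          gcongr
      _ = 1 / (A * (k + 1).factorial) := by
          rw [Nat.factorial_succ]
          push_cast
          field_simp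

lemma integral_one_div_add_sum_pow_card_le (hA : 0 < A) :
    ∫ x : ι → I, 1 / (A + ∑ i, (x i : ℝ)) ^ Fintype.card ι ≤
      (A + Fintype.card ι) / (A * (Fintype.card ι).factorial) := by
  set k := Fintype.card ι
  let e : Fin k ≃ ι := (Fintype.equivFin ι).symm
  calc ∫ x : ι → I, 1 / (A + ∑ i, (x i : ℝ)) ^ k
      = ∫ x : Fin k → I, 1 / (A + ∑ i, (x i : ℝ)) ^ k := by
        rw [← (volume_measurePreserving_piCongrLeft (fun _ : ι => I) e).integral_comp
          (MeasurableEquiv.measurableEmbedding _)]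
        simp only [← e.sum_comp, MeasurableEquiv.coe_piCongrLeft, Equiv.piCongrLeft_apply_apply]
    _ ≤ ∫ x : Fin k → I, (A + k) * (1 / (A + ∑ i, (x i : ℝ)) ^ (k + 1)) := by
        refine integral_mono (integrable_one_div_add_sum_pow hA _)
          ((integrable_one_div_add_sum_pow hA _).const_mul _) fun x => ?_
        have hpos : 0 < A + ∑ i, (x i : ℝ) := by linarith [sum_coe_nonneg x]
        have hle := sum_coe_le_card x
        rw [Fintype.card_fin] at hle
        dsimp only
        rw [mul_one_div, div_le_div_iff₀ (by positivity) (by positivity), one_mul, pow_succ']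
        gcongr
    _ ≤ (A + k) * (1 / (A * k.factorial)) := by
        rw [integral_const_mul]
        gcongr
        exact integral_fin_one_div_add_sum_pow_succ_le hA k
    _ = (A + k) / (A * k.factorial) := mul_one_div _ _

lemma prod_exp_mul_prod_exp_sum_erase [DecidableEq ι] (s d : ℝ) (t x : ι → ℝ) :
    (∏ i, Real.exp (-t i * d)) * ∏ k, Real.exp (-x k * (s + ∑ i ∈ univ.erase k, t i)) =
      Real.exp (-s * ∑ i, x i) * ∏ i, Real.exp (-t i * (d + (∑ k, x k - x i))) := by
  simp only [← Real.exp_sum, ← Real.exp_add, sum_erase_eq_sub (mem_univ _), mul_add, mul_sub,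
    sum_add_distrib, sum_sub_distrib, ← sum_mul, sum_neg_distrib, neg_mul, mul_comm (x _) (t _)]
  ring_nf

lemma integral_exp_mul_prod_exp_le {d : ℝ} (hd : 0 ≤ d) (s : ℝ) (x : ι → I) :
    ∫ t : ι → I, Real.exp (-s * ∑ i, (x i : ℝ)) *
        ∏ i, Real.exp (-(t i : ℝ) * (d + (∑ k, (x k : ℝ) - x i))) ≤
      Real.exp (-s * ∑ i, (x i : ℝ)) * ∏ i, (1 / max 1 (d + (∑ k, (x k : ℝ) - x i))) := by
  rw [integral_const_mul, integral_fintype_prod_volume_eq_prod fun i (t : I) =>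
    Real.exp (-(t : ℝ) * (d + (∑ k, (x k : ℝ) - x i)))]
  gcongr with i
  refine integral_exp_neg_mul_le ?_
  have : (x i : ℝ) ≤ ∑ k, (x k : ℝ) :=
    single_le_sum (f := fun k => (x k : ℝ)) (fun k _ => (x k).2.1) (mem_univ i)
  linarith

lemma integrable_exp_mul_prod_one_div_max (d s : ℝ) :
    Integrable fun x : ι → I => Real.exp (-s * ∑ i, (x i : ℝ)) *
      ∏ i, (1 / max 1 (d + (∑ k, (x k : ℝ) - x i))) :=
  integrable_of_continuous <| Continuous.mul (by fun_prop) <|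
    continuous_finsetProd _ fun i _ => Continuous.div (by fun_prop) (by fun_prop) fun x =>
      (zero_lt_one.trans_le (le_max_left _ _)).ne'

lemma one_div_max_sub_le {a x : ℝ} (hx0 : 0 ≤ x) (hx1 : x ≤ 1) :
    1 / max 1 (a - x) ≤ 1 / max 1 a * Real.exp (2 * x / max 1 a) := by
  set Y := max 1 a
  set y := max 1 (a - x)
  have hY : 1 ≤ Y := le_max_left _ _
  have hy : 1 ≤ y := le_max_left _ _
  have hYy : Y - x ≤ y :=
    sub_le_iff_le_add.2 (max_le (by linarith) (by linarith [le_max_right 1 (a - x)]))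
  calc 1 / y ≤ 1 / Y * (2 * x / Y + 1) := by
        rw [div_mul_eq_mul_div, one_mul, div_add_one (by positivity), div_div,
          div_le_div_iff₀ (by positivity) (by positivity)]
        nlinarith
    _ ≤ 1 / Y * Real.exp (2 * x / Y) := by
        gcongr
        exact Real.add_one_le_exp _

lemma prod_one_div_max_sub_le {d : ℝ} (hd : 0 ≤ d) (x : ι → I) :
    ∏ i, (1 / max 1 (d + (∑ k, (x k : ℝ) - x i))) ≤
      Real.exp 2 * (1 / max 1 (d + ∑ k, (x k : ℝ)) ^ Fintype.card ι) := by
  set Y := max 1 (d + ∑ k, (x k : ℝ))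
  have sum_le : ∑ i, 2 * (x i : ℝ) / Y ≤ 2 := by
    rw [← sum_div, ← mul_sum, div_le_iff₀ (by positivity)]
    linarith [le_max_right 1 (d + ∑ k, (x k : ℝ))]
  calc _ ≤ ∏ i, (1 / Y * Real.exp (2 * (x i : ℝ) / Y)) :=
        prod_le_prod (fun i _ => by positivity) fun i _ => by
          rw [← add_sub_assoc]
          exact one_div_max_sub_le (x i).2.1 (x i).2.2
    _ = Real.exp (∑ i, 2 * (x i : ℝ) / Y) * (1 / Y ^ Fintype.card ι) := by
        rw [prod_mul_distrib, Real.exp_sum, prod_const, one_div_pow, card_univ, mul_comm]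
    _ ≤ _ := by gcongr

end Cube

end UnitIntervalIntegrals

section PermutationIntegrals

variable {α ι : Type*} [LinearOrder α] [Fintype α]

lemma expect_perm_prod_eq_integral {j : α} {D : Finset α} (hj : j ∉ D) (u : α → ℝ) :
    𝔼 τ : Equiv.Perm α, ∏ g ∈ D, (if τ g < τ j then 1 - u g else 1) =
      ∫ x : I, ∏ g ∈ D, (1 - u g * (x : ℝ)) := by
  have expand_perm : ∀ τ : Equiv.Perm α, ∏ g ∈ D, (if τ g < τ j then 1 - u g else 1) =
      ∑ t ∈ D.powerset, ((∏ g ∈ t, (1 - u g)) * ∏ g ∈ D \ t, u g) *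
        if ∀ g ∈ D \ t, τ j < τ g then 1 else 0 := by
    intro τ
    have split_factor : ∀ g ∈ D, (if τ g < τ j then 1 - u g else (1 : ℝ)) =
        (1 - u g) + u g * if τ j < τ g then 1 else 0 := by
      intro g hg
      rcases lt_or_gt_of_ne fun h : τ g = τ j => hj (τ.injective h ▸ hg) with h | h
      · rw [if_pos h, if_neg h.not_gt, mul_zero, add_zero]
      · rw [if_neg h.not_gt, if_pos h, mul_one, sub_add_cancel]
    rw [prod_congr rfl split_factor, prod_add]
    refine sum_congr rfl fun t _ => ?_
    rw [prod_mul_distrib, mul_assoc, prod_ite_zero, prod_const_one]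
    congr
  have expand_integrand : ∀ x : I, ∏ g ∈ D, (1 - u g * (x : ℝ)) =
      ∑ t ∈ D.powerset, ((∏ g ∈ t, (1 - u g)) * ∏ g ∈ D \ t, u g) * (1 - (x : ℝ)) ^ #(D \ t) := by
    intro x
    rw [prod_congr rfl fun g _ => show 1 - u g * (x : ℝ) = (1 - u g) + u g * (1 - x) by ring,
      prod_add]
    refine sum_congr rfl fun t _ => ?_
    rw [prod_mul_distrib, mul_assoc, prod_const]
  simp only [expand_perm, expand_integrand]
  rw [expect_sum_comm, integral_finsetSum _ fun t _ => integrable_of_continuous (by fun_prop)]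
  refine sum_congr rfl fun t _ => ?_
  rw [integral_const_mul, integral_one_sub_pow, ← mul_expect, ← uniformProb_eq_expect,
    uniformProb_perm_forall_lt fun h => hj (mem_sdiff.1 h).1]

lemma expect_perm_prod_le_integral_exp {j : α} {D : Finset α} (hj : j ∉ D) {u : α → ℝ}
    (hu : ∀ g ∈ D, u g ≤ 1) :
    𝔼 τ : Equiv.Perm α, ∏ g ∈ D, (if τ g < τ j then 1 - u g else 1) ≤
      ∫ x : I, Real.exp (-(x : ℝ) * ∑ g ∈ D, u g) := by
  rw [expect_perm_prod_eq_integral hj]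
  refine integral_mono (integrable_of_continuous (by fun_prop))
    (integrable_of_continuous (by fun_prop)) fun x => ?_
  dsimp only
  rw [mul_sum, Real.exp_sum]
  refine prod_le_prod (fun g hg => ?_) fun g _ => ?_
  · nlinarith [x.2.1, x.2.2, hu g hg]
  · linarith [Real.add_one_le_exp (-(x : ℝ) * u g)]

lemma expect_perm_prod_mul_prod_le {j : α} {S : Finset α} (hjS : j ∉ S) {u : α → ℝ}
    (hu : ∀ g ∈ S, u g ≤ 1) (girl : ι ↪ α) {T : Finset ι} (hjT : ∀ i ∈ T, girl i ≠ j)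
    (hTS : ∀ i, girl i ∉ S) {t : ι → ℝ} (ht : ∀ i, t i ≤ 1) :
    𝔼 τ : Equiv.Perm α, (∏ g ∈ S, if τ g < τ j then 1 - u g else 1) *
        ∏ i ∈ T, (if τ (girl i) < τ j then 1 - t i else 1) ≤
      ∫ x : I, Real.exp (-(x : ℝ) * (∑ g ∈ S, u g + ∑ i ∈ T, t i)) := by
  let v : α → ℝ := Function.extend girl t u
  have v_girl : ∀ i, v (girl i) = t i := girl.injective.extend_apply _ _
  have v_eq : ∀ g ∈ S, v g = u g := fun g hg =>
    Function.extend_apply' _ _ _ fun ⟨i, hi⟩ => hTS i (hi ▸ hg)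
  have hdisj : Disjoint S (T.map girl) := disjoint_left.2 fun g hg hg' => by
    obtain ⟨i, -, rfl⟩ := mem_map.1 hg'
    exact hTS i hg
  have hj : j ∉ S.disjUnion (T.map girl) hdisj := by
    simpa [hjS] using hjT
  have hv : ∀ g ∈ S.disjUnion (T.map girl) hdisj, v g ≤ 1 := by
    intro g hg
    rcases mem_disjUnion.1 hg with hg | hg
    · exact (v_eq g hg).trans_le (hu g hg)
    · obtain ⟨i, -, rfl⟩ := mem_map.1 hg
      exact (v_girl i).trans_le (ht i)
  have bound := expect_perm_prod_le_integral_exp hj hv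
  simp only [prod_disjUnion, sum_disjUnion, prod_map, sum_map, v_girl] at bound
  rwa [sum_congr rfl v_eq, expect_congr rfl fun τ _ => by
    rw [prod_congr rfl fun g hg => by rw [v_eq g hg]]] at bound

end PermutationIntegrals

section FirstMoment

variable {n : ℕ} {ι : Type*} [Fintype ι]

section Definitions

variable [DecidableEq ι]

/-- Given couples `(girl k, boy k)`, the indices of the boys other than `boy i` who, for the boys'
rankings `B`, prefer `girl i` to their own partner. -/
def admirers (girl boy : ι → Fin n) (B : Fin n → Equiv.Perm (Fin n)) (i : ι) : Finset ι :=
  {k | k ≠ i ∧ B (boy k) (girl i) < B (boy k) (girl k)}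

/-- Every girl among the couples `(girl i, boy i)` prefers her partner to her admirers and to the
boys in `D`. -/
def IsContent (girl boy : ι → Fin n) (D : Finset (Fin n)) (P : PrefProfile n) : Prop :=
  ∀ i, ∀ a ∈ D ∪ (admirers girl boy P.2 i).image boy, P.1 (girl i) (boy i) < P.1 (girl i) a

instance (girl boy : ι → Fin n) (D : Finset (Fin n)) : DecidablePred (IsContent girl boy D) :=
  fun P => inferInstanceAs (Decidable (∀ i, ∀ a ∈ D ∪ (admirers girl boy P.2 i).image boy,
    P.1 (girl i) (boy i) < P.1 (girl i) a))

end Definitions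

/-- The exponential weight recording which girls `g ∈ S` the boys of the couples
`(girl k, boy k)` prefer to their partners: a factor `1 - u g` for each such preference. -/
def outsiderWeight (girl boy : ι → Fin n) (S : Finset (Fin n)) (u : Fin n → ℝ)
    (B : Fin n → Equiv.Perm (Fin n)) : ℝ :=
  ∏ k, ∏ g ∈ S, if B (boy k) g < B (boy k) (girl k) then 1 - u g else 1

lemma outsiderWeight_nonneg (girl boy : ι → Fin n) {S : Finset (Fin n)} {u : Fin n → ℝ}
    (hu : ∀ g ∈ S, u g ≤ 1) (B : Fin n → Equiv.Perm (Fin n)) :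
    0 ≤ outsiderWeight girl boy S u B :=
  prod_nonneg fun k _ => prod_nonneg fun g hg => by
    split_ifs
    · linarith [hu g hg]
    · exact zero_le_one

variable [DecidableEq ι] (girl boy : ι ↪ Fin n)

lemma prod_pow_card_admirers (B : Fin n → Equiv.Perm (Fin n)) (t : ι → ℝ) :
    ∏ i, (1 - t i) ^ #(admirers girl boy B i) =
      ∏ k, ∏ i ∈ univ.erase k, if B (boy k) (girl i) < B (boy k) (girl k) then 1 - t i else 1 := by
  have factor_eq : ∀ i, (1 - t i) ^ #(admirers girl boy B i) =
      ∏ k, if k ≠ i ∧ B (boy k) (girl i) < B (boy k) (girl k) then 1 - t i else 1 := fun i => by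
    rw [← prod_filter, prod_const, admirers]
  simp only [factor_eq]
  rw [prod_comm]
  refine prod_congr rfl fun k _ => ?_
  rw [← mul_prod_erase univ _ (mem_univ k), if_neg (by simp), one_mul]
  exact prod_congr rfl fun i hi => by simp [(ne_of_mem_erase hi).symm]

lemma expect_girls_isContent {D : Finset (Fin n)} (hD : ∀ i, boy i ∉ D)
    (B : Fin n → Equiv.Perm (Fin n)) :
    𝔼 G : Fin n → Equiv.Perm (Fin n), (if IsContent girl boy D (G, B) then (1 : ℝ) else 0) =
      ∫ t : ι → I, ∏ i, (1 - (t i : ℝ)) ^ (#D + #(admirers girl boy B i)) := by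
  let rivals : ι → Finset (Fin n) := fun i => D ∪ (admirers girl boy B i).image boy
  have card_rivals : ∀ i, #(rivals i) = #D + #(admirers girl boy B i) := fun i => by
    rw [card_union_of_disjoint, card_image_of_injective _ boy.injective]
    refine disjoint_right.2 fun a ha => ?_
    obtain ⟨k, -, rfl⟩ := mem_image.1 ha
    exact hD k
  have boy_notMem : ∀ i, boy i ∉ rivals i := by
    simp [rivals, hD, admirers]
  have indicator_eq : ∀ G : Fin n → Equiv.Perm (Fin n),
      (if IsContent girl boy D (G, B) then (1 : ℝ) else 0) =
        ∏ i, if ∀ a ∈ rivals i, G (girl i) (boy i) < G (girl i) a then 1 else 0 := fun G => by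
    split_ifs with h
    · exact (prod_eq_one fun i _ => if_pos (h i)).symm
    · obtain ⟨i, hi⟩ := not_forall.1 h
      exact (prod_eq_zero (mem_univ i) (if_neg hi)).symm
  simp only [indicator_eq]
  rw [expect_prod_comp_embedding girl fun i (τ : Equiv.Perm (Fin n)) =>
      if ∀ a ∈ rivals i, τ (boy i) < τ a then (1 : ℝ) else 0,
    integral_fintype_prod_volume_eq_prod fun i (t : I) =>
      (1 - (t : ℝ)) ^ (#D + #(admirers girl boy B i))]
  refine prod_congr rfl fun i _ => ?_
  rw [integral_one_sub_pow, ← uniformProb_eq_expect, uniformProb_perm_forall_lt (boy_notMem i),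
    card_rivals, Nat.cast_add]

variable {S : Finset (Fin n)} {u : Fin n → ℝ}

lemma one_sub_pow_le_exp {t : ℝ} (ht : t ≤ 1) (d : ℕ) : (1 - t) ^ d ≤ Real.exp (-t * d) := by
  rw [mul_comm, Real.exp_nat_mul]
  exact pow_le_pow_left₀ (sub_nonneg.2 ht) (Real.one_sub_le_exp_neg _) d

lemma expect_boys_outsiderWeight_mul_le (hS : ∀ i, girl i ∉ S) (hu : ∀ g ∈ S, u g ≤ 1) (d : ℕ)
    (t : ι → I) :
    𝔼 B : Fin n → Equiv.Perm (Fin n), outsiderWeight girl boy S u B *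
        ∏ i, (1 - (t i : ℝ)) ^ (d + #(admirers girl boy B i)) ≤
      ∫ x : ι → I, Real.exp (-(∑ g ∈ S, u g) * ∑ i, (x i : ℝ)) *
        ∏ i, Real.exp (-(t i : ℝ) * (d + (∑ k, (x k : ℝ) - x i))) := by
  let boyFactor : ι → Equiv.Perm (Fin n) → ℝ := fun k τ =>
    (∏ g ∈ S, if τ g < τ (girl k) then 1 - u g else 1) *
      ∏ i ∈ univ.erase k, if τ (girl i) < τ (girl k) then 1 - (t i : ℝ) else 1
  have boyFactor_nonneg : ∀ k τ, 0 ≤ boyFactor k τ := fun k τ =>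
    mul_nonneg (prod_nonneg fun g hg => by split_ifs <;> linarith [hu g hg])
      (prod_nonneg fun i _ => by split_ifs <;> linarith [(t i).2.2])
  have expect_boyFactor_le : ∀ k, 𝔼 τ, boyFactor k τ ≤
      ∫ x : I, Real.exp (-(x : ℝ) * (∑ g ∈ S, u g + ∑ i ∈ univ.erase k, (t i : ℝ))) := fun k =>
    expect_perm_prod_mul_prod_le (hS k) hu girl
      (fun i hi h => ne_of_mem_erase hi (girl.injective h)) hS fun i => (t i).2.2
  have factorization : ∀ B : Fin n → Equiv.Perm (Fin n), outsiderWeight girl boy S u B *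
      ∏ i, (1 - (t i : ℝ)) ^ (d + #(admirers girl boy B i)) =
        (∏ i, (1 - (t i : ℝ)) ^ d) * ∏ k, boyFactor k (B (boy k)) := fun B => by
    simp only [pow_add, prod_mul_distrib, prod_pow_card_admirers, boyFactor, outsiderWeight]
    ring
  simp only [factorization, ← mul_expect]
  rw [expect_prod_comp_embedding]
  calc (∏ i, (1 - (t i : ℝ)) ^ d) * ∏ k, 𝔼 τ, boyFactor k τ
      ≤ (∏ i, Real.exp (-(t i : ℝ) * d)) * ∏ k, ∫ x : I, Real.exp
          (-(x : ℝ) * (∑ g ∈ S, u g + ∑ i ∈ univ.erase k, (t i : ℝ))) :=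
        mul_le_mul (prod_le_prod (fun i _ => pow_nonneg (by linarith [(t i).2.2]) _)
            fun i _ => one_sub_pow_le_exp (t i).2.2 d)
          (prod_le_prod (fun k _ => expect_nonneg fun τ _ => boyFactor_nonneg k τ)
            fun k _ => expect_boyFactor_le k)
          (prod_nonneg fun k _ => expect_nonneg fun τ _ => boyFactor_nonneg k τ)
          (prod_nonneg fun i _ => (Real.exp_pos _).le)
    _ = _ := by
        rw [← integral_fintype_prod_volume_eq_prod fun k (x : I) => Real.exp
            (-(x : ℝ) * (∑ g ∈ S, u g + ∑ i ∈ univ.erase k, (t i : ℝ))), ← integral_const_mul]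
        refine integral_congr_ae (.of_forall fun x => ?_)
        exact prod_exp_mul_prod_exp_sum_erase _ _ (fun i => (t i : ℝ)) fun i => (x i : ℝ)

lemma expect_outsiderWeight_mul_isContent_eq_integral {D : Finset (Fin n)}
    (hD : ∀ i, boy i ∉ D) :
    𝔼 P : PrefProfile n,
        outsiderWeight girl boy S u P.2 * (if IsContent girl boy D P then 1 else 0) =
      ∫ t : ι → I, 𝔼 B : Fin n → Equiv.Perm (Fin n), outsiderWeight girl boy S u B *
        ∏ i, (1 - (t i : ℝ)) ^ (#D + #(admirers girl boy B i)) := by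
  calc _ = 𝔼 B : Fin n → Equiv.Perm (Fin n), 𝔼 G : Fin n → Equiv.Perm (Fin n),
          outsiderWeight girl boy S u B * (if IsContent girl boy D (G, B) then 1 else 0) := by
        rw [← univ_product_univ, expect_product, expect_comm]
    _ = 𝔼 B : Fin n → Equiv.Perm (Fin n), ∫ t : ι → I, outsiderWeight girl boy S u B *
          ∏ i, (1 - (t i : ℝ)) ^ (#D + #(admirers girl boy B i)) := by
        simp only [← mul_expect, expect_girls_isContent girl boy hD, integral_const_mul]
    _ = _ := expect_integral _ fun B => integrable_of_continuous (by fun_prop)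

lemma expect_outsiderWeight_mul_isContent_le_integral (hS : ∀ i, girl i ∉ S)
    (hu : ∀ g ∈ S, u g ≤ 1) {D : Finset (Fin n)} (hD : ∀ i, boy i ∉ D) :
    𝔼 P : PrefProfile n,
        outsiderWeight girl boy S u P.2 * (if IsContent girl boy D P then 1 else 0) ≤
      ∫ x : ι → I, Real.exp (-(∑ g ∈ S, u g) * ∑ i, (x i : ℝ)) *
        ∏ i, (1 / max 1 (#D + (∑ k, (x k : ℝ) - x i))) := by
  let F : (ι → I) → (ι → I) → ℝ := fun t x => Real.exp (-(∑ g ∈ S, u g) * ∑ i, (x i : ℝ)) *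
    ∏ i, Real.exp (-(t i : ℝ) * (#D + (∑ k, (x k : ℝ) - x i)))
  have hF : Integrable (Function.uncurry F)
      ((volume : Measure (ι → I)).prod (volume : Measure (ι → I))) :=
    integrable_of_continuous (by simp only [F, Function.uncurry_def]; fun_prop)
  rw [expect_outsiderWeight_mul_isContent_eq_integral girl boy hD]
  calc _ ≤ ∫ t, ∫ x, F t x := by
        refine integral_mono (integrable_of_continuous ?_) hF.integral_prod_left
          fun t => expect_boys_outsiderWeight_mul_le girl boy hS hu #D t
        simp only [Fintype.expect_eq_sum_div_card]
        fun_prop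
    _ = ∫ x, ∫ t, F t x := integral_integral_swap hF
    _ ≤ _ := integral_mono hF.integral_prod_right (integrable_exp_mul_prod_one_div_max _ _)
        fun x => integral_exp_mul_prod_exp_le (Nat.cast_nonneg _) _ x

lemma expect_outsiderWeight_mul_isContent_le (hS : ∀ i, girl i ∉ S) (hu : ∀ g ∈ S, u g ≤ 1)
    {D : Finset (Fin n)} (hD : ∀ i, boy i ∉ D) {E A : ℝ} (hE : 0 ≤ E) (hA : 0 < A)
    (hbound : ∀ s : ℝ, 0 ≤ s →
      Real.exp (-(∑ g ∈ S, u g) * s) * (1 / max 1 (#D + s) ^ Fintype.card ι) ≤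
        E * (1 / (A + s) ^ Fintype.card ι)) :
    𝔼 P : PrefProfile n,
        outsiderWeight girl boy S u P.2 * (if IsContent girl boy D P then 1 else 0) ≤
      Real.exp 2 * E * ((A + Fintype.card ι) / (A * (Fintype.card ι).factorial)) := by
  have integrand_le : ∀ x : ι → I, Real.exp (-(∑ g ∈ S, u g) * ∑ i, (x i : ℝ)) *
      ∏ i, (1 / max 1 (#D + (∑ k, (x k : ℝ) - x i))) ≤
        Real.exp 2 * E * (1 / (A + ∑ i, (x i : ℝ)) ^ Fintype.card ι) := fun x => by
    calc _ ≤ Real.exp (-(∑ g ∈ S, u g) * ∑ i, (x i : ℝ)) *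
            (Real.exp 2 * (1 / max 1 (#D + ∑ k, (x k : ℝ)) ^ Fintype.card ι)) := by
          gcongr
          exact prod_one_div_max_sub_le (Nat.cast_nonneg _) x
      _ ≤ _ := by
          rw [mul_left_comm, mul_assoc]
          exact mul_le_mul_of_nonneg_left (hbound _ (sum_coe_nonneg x)) (Real.exp_pos 2).le
  calc _ ≤ _ := expect_outsiderWeight_mul_isContent_le_integral girl boy hS hu hD
    _ ≤ _ := integral_mono (integrable_exp_mul_prod_one_div_max _ _)
        ((integrable_one_div_add_sum_pow hA _).const_mul _) integrand_le
    _ ≤ _ := by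
        rw [integral_const_mul]
        gcongr
        exact integral_one_div_add_sum_pow_card_le hA

lemma uniformProb_le_of_le_outsiderWeight (hS : ∀ i, girl i ∉ S) (hu : ∀ g ∈ S, u g ≤ 1)
    {D : Finset (Fin n)} (hD : ∀ i, boy i ∉ D) {E A : ℝ} (hE : 0 ≤ E) (hA : 0 < A)
    (hbound : ∀ s : ℝ, 0 ≤ s →
      Real.exp (-(∑ g ∈ S, u g) * s) * (1 / max 1 (#D + s) ^ Fintype.card ι) ≤
        E * (1 / (A + s) ^ Fintype.card ι))
    {p : PrefProfile n → Prop} {w : ℝ} (hw : 0 < w)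
    (hp : ∀ P, p P → IsContent girl boy D P ∧ w ≤ outsiderWeight girl boy S u P.2) :
    uniformProb p ≤
      Real.exp 2 * E * ((A + Fintype.card ι) / (A * (Fintype.card ι).factorial)) / w := by
  calc uniformProb p
      ≤ 𝔼 P : PrefProfile n,
          outsiderWeight girl boy S u P.2 * (if IsContent girl boy D P then 1 else 0) / w := by
        refine uniformProb_le_expect (fun P => ?_) fun P hP => ?_
        · have := outsiderWeight_nonneg girl boy hu P.2
          positivity
        · rw [if_pos (hp P hP).1, mul_one, one_le_div hw]
          exact (hp P hP).2
    _ = (𝔼 P : PrefProfile n,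
          outsiderWeight girl boy S u P.2 * (if IsContent girl boy D P then 1 else 0)) / w :=
        (expect_div _ _ _).symm
    _ ≤ _ := by
        gcongr
        exact expect_outsiderWeight_mul_isContent_le girl boy hS hu hD hE hA hbound

end FirstMoment

section ConfigurationProbabilities

variable {n : ℕ} {z g : Fin n} {M : Fin n ≃ Fin n} {P : PrefProfile n} {k : ℕ}

lemma StableOff.isContent {p : Fin n → Prop} [DecidablePred p] (h : StableOff z P M)
    (hp : ∀ i, p i → i ≠ z) {D : Finset (Fin n)}
    (hD : ∀ i, p i → ∀ a ∈ D, GirlPrefers P i (M i) a) :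
    IsContent (Subtype.val : {i // p i} → Fin n) (fun i => M i) D P := by
  intro i a ha
  rcases mem_union.1 ha with ha | ha
  · exact hD i i.2 a ha
  · obtain ⟨l, hl, rfl⟩ := mem_image.1 ha
    exact h l i (hp l l.2) (hp i i.2) (mem_filter.1 hl).2.2

lemma outsiderWeight_singleton (θ : ℝ) :
    outsiderWeight (Subtype.val : {i // i ≠ z} → Fin n) (fun i => M i) {z} (fun _ => θ) P.2 =
      (1 - θ) ^ suitorCount z P M := by
  simp only [outsiderWeight, prod_singleton]
  rw [← prod_subtype ({i | i ≠ z} : Finset (Fin n)) (by simp) fun i =>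
      if P.2 (M i) z < P.2 (M i) i then 1 - θ else 1,
    ← prod_filter, filter_filter, prod_const, suitorCount]

lemma exp_neg_mul_one_div_one_add_pow_le {k : ℝ} (hk : 0 < k) (m : ℕ) {s : ℝ} (hs : 0 ≤ s) :
    Real.exp (-(m / (8 * k ^ 2)) * s) * (1 / (1 + s) ^ m) ≤
      Real.exp (m / (8 * k ^ 2) - m / (2 * k)) * (1 / (1 / 2 + s) ^ m) := by
  have ratio_le : (1 / 2 + s) / (1 + s) ≤ Real.exp (-(1 / (2 * (1 + s)))) := by
    refine le_trans (le_of_eq ?_) (Real.one_sub_le_exp_neg _)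
    field_simp
    ring
  have ratio_pow_le : ((1 / 2 + s) / (1 + s)) ^ m ≤ Real.exp (-(m / (2 * (1 + s)))) :=
    (pow_le_pow_left₀ (by positivity) ratio_le m).trans_eq <| by
      rw [← Real.exp_nat_mul]
      ring_nf
  have amgm : m / (2 * k) ≤ m / (8 * k ^ 2) * (1 + s) + m / (2 * (1 + s)) := by
    have hsq : 0 ≤ m * ((1 + s) - 2 * k) ^ 2 / (8 * k ^ 2 * (1 + s)) := by positivity
    have : m / (8 * k ^ 2) * (1 + s) + m / (2 * (1 + s)) - m / (2 * k) =
        m * ((1 + s) - 2 * k) ^ 2 / (8 * k ^ 2 * (1 + s)) := by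
      field_simp
      ring
    linarith
  calc Real.exp (-(m / (8 * k ^ 2)) * s) * (1 / (1 + s) ^ m)
      = Real.exp (-(m / (8 * k ^ 2)) * s) * ((1 / 2 + s) / (1 + s)) ^ m *
          (1 / (1 / 2 + s) ^ m) := by
        rw [div_pow]
        field_simp
    _ ≤ Real.exp (-(m / (8 * k ^ 2)) * s) * Real.exp (-(m / (2 * (1 + s)))) *
          (1 / (1 / 2 + s) ^ m) := by gcongr
    _ ≤ _ := by
        rw [← Real.exp_add]
        gcongr
        linarith

lemma exp_neg_two_mul_le_one_sub {θ : ℝ} (h0 : 0 ≤ θ) (h1 : θ ≤ 1 / 2) :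
    Real.exp (-(2 * θ)) ≤ 1 - θ := by
  have h := Real.add_one_le_exp (2 * θ)
  rw [Real.exp_neg, inv_le_iff_one_le_mul₀ (Real.exp_pos _)]
  nlinarith

lemma div_eight_mul_sq_le_half {m k : ℕ} (hk : 1 ≤ k) (hmk : m ≤ 4 * k ^ 2) :
    m / (8 * (k : ℝ) ^ 2) ≤ 1 / 2 := by
  have hm : (m : ℝ) ≤ 4 * k ^ 2 := by exact_mod_cast hmk
  rw [div_le_iff₀ (by positivity)]
  linarith

lemma exp_neg_le_one_sub_pow {m k : ℕ} (hk : 1 ≤ k) (hmk : m ≤ 4 * k ^ 2) :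
    Real.exp (-(m / (4 * k))) ≤ (1 - m / (8 * (k : ℝ) ^ 2)) ^ k := by
  calc Real.exp (-(m / (4 * k))) = Real.exp (-(2 * (m / (8 * (k : ℝ) ^ 2)))) ^ k := by
        rw [← Real.exp_nat_mul]
        congr 1
        field_simp
        ring
    _ ≤ _ := by
        gcongr
        exact exp_neg_two_mul_le_one_sub (by positivity) (div_eight_mul_sq_le_half hk hmk)

lemma uniformProb_lateConfiguration_le (z : Fin n) (M : Fin n ≃ Fin n) (hk : 1 ≤ k)
    (hnk : n - 1 ≤ 4 * k ^ 2) :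
    uniformProb (fun P => LateConfiguration z P M k) ≤
      Real.exp 3 * Real.exp (-((n - 1 : ℕ) / (4 * k))) * (2 * n) / (n - 1).factorial := by
  set m := n - 1 with hm
  set θ : ℝ := m / (8 * (k : ℝ) ^ 2)
  have hk0 : (0 : ℝ) < k := by exact_mod_cast hk
  have hmn : (m : ℝ) + 1 = n := by exact_mod_cast Nat.sub_add_cancel (Fin.pos z)
  have hθ0 : 0 ≤ θ := by positivity
  have hθ1 : θ ≤ 1 / 2 := div_eight_mul_sq_le_half hk hnk
  have hcard : Fintype.card {i : Fin n // i ≠ z} = m := by simp [hm]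
  have hprob := uniformProb_le_of_le_outsiderWeight (.subtype (· ≠ z))
    ((Function.Embedding.subtype (· ≠ z)).trans M.toEmbedding) (S := {z}) (u := fun _ => θ)
    (D := {M z}) (E := Real.exp (θ - m / (2 * k))) (A := 1 / 2) (w := Real.exp (-(m / (4 * k))))
    (p := fun P => LateConfiguration z P M k)
    (fun i => by simpa using i.2) (fun _ _ => by linarith) (fun i => by simpa using i.2)
    (Real.exp_pos _).le one_half_pos (fun s hs => by
      rw [sum_singleton, card_singleton, hcard, Nat.cast_one, max_eq_right (by linarith)]
      exact exp_neg_mul_one_div_one_add_pow_le hk0 m hs) (Real.exp_pos _) fun P hP =>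
    ⟨hP.stableOff.isContent (fun _ => id) fun i hi a ha =>
        (mem_singleton.1 ha).symm ▸ hP.girlPrefers i hi,
      ((exp_neg_le_one_sub_pow hk hnk).trans
        (pow_le_pow_of_le_one (by linarith) (by linarith) hP.suitorCount_le)).trans_eq
          (outsiderWeight_singleton θ).symm⟩
  rw [hcard] at hprob
  calc _ ≤ _ := hprob
    _ = Real.exp (2 + (θ - m / (2 * k)) + m / (4 * k)) * ((2 * m + 1) / m.factorial) := by
        rw [Real.exp_add, Real.exp_add, Real.exp_neg, div_inv_eq_mul]
        field_simp
        ring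
    _ ≤ Real.exp (3 + -(m / (4 * k))) * ((2 * n) / m.factorial) := by
        have : (m : ℝ) / (2 * k) = m / (4 * k) + m / (4 * k) := by
          field_simp
          ring
        refine mul_le_mul (Real.exp_le_exp.2 (by linarith)) ?_ (by positivity) (Real.exp_pos _).le
        gcongr
        linarith
    _ = _ := by rw [Real.exp_add, ← mul_div_assoc]

lemma uniformProb_exists_lateConfiguration_le (z : Fin n) (hk : 1 ≤ k)
    (hnk : n - 1 ≤ 4 * k ^ 2) :
    uniformProb (fun P => ∃ M, LateConfiguration z P M k) ≤
      Real.exp 3 * (2 * n ^ 2) * Real.exp (-((n - 1 : ℕ) / (4 * k))) := by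
  calc _ ≤ ∑ M : Equiv.Perm (Fin n), uniformProb fun P => LateConfiguration z P M k :=
        uniformProb_exists_le fun M P => LateConfiguration z P M k
    _ ≤ ∑ _M : Equiv.Perm (Fin n),
          Real.exp 3 * Real.exp (-((n - 1 : ℕ) / (4 * k))) * (2 * n) / (n - 1).factorial :=
        sum_le_sum fun M _ => uniformProb_lateConfiguration_le z M hk hnk
    _ = _ := by
        rw [sum_const, card_univ, Fintype.card_perm, Fintype.card_fin, nsmul_eq_mul,
          ← Nat.mul_factorial_pred (Fin.pos z).ne']
        push_cast
        field_simp

lemma pow_le_outsiderWeight_pair (h : EarlyConfiguration z P M g k) :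
    (3 / 2) ^ (k - 2) ≤ outsiderWeight (Subtype.val : {i // i ≠ z ∧ i ≠ g} → Fin n) (fun i => M i)
      {z, g} (fun a => if a = z then -1 / 2 else 1) P.2 := by
  have factor_eq : ∀ i : {i // i ≠ z ∧ i ≠ g},
      (∏ a ∈ {z, g}, if P.2 (M i) a < P.2 (M i) i then 1 - (if a = z then -1 / 2 else 1) else 1) =
        if P.2 (M i) z < P.2 (M i) i then (3 / 2 : ℝ) else 1 := fun i => by
    rw [prod_pair h.ne.symm, 
      if_neg (show ¬P.2 (M i) g < P.2 (M i) i from h.not_boyPrefers i i.2.1), mul_one, if_pos rfl]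
    norm_num
  have card_eq : ({i | (i ≠ z ∧ i ≠ g) ∧ P.2 (M i) z < P.2 (M i) i} : Finset (Fin n)) =
      ({i | i ≠ z ∧ P.2 (M i) z < P.2 (M i) i} : Finset (Fin n)).erase g := by
    ext i
    simp only [mem_filter, mem_erase, mem_univ, true_and]
    tauto
  simp only [outsiderWeight, factor_eq]
  rw [← prod_subtype ({i | i ≠ z ∧ i ≠ g} : Finset (Fin n)) (by simp) fun i =>
      if P.2 (M i) z < P.2 (M i) i then (3 / 2 : ℝ) else 1,
    ← prod_filter, filter_filter, prod_const, card_eq]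
  refine pow_le_pow_right₀ (by norm_num) (le_trans ?_ pred_card_le_card_erase)
  have := h.le_suitorCount
  rw [suitorCount] at this
  omega

lemma one_div_max_one_pow_le {m n : ℕ} (hmn : m ≤ n) (hn : 0 < n) {s : ℝ} (hs : 0 ≤ s) :
    1 / max 1 s ^ m ≤ Real.exp 1 * (1 / (1 / n + s) ^ m) := by
  have hn0 : (0 : ℝ) < n := by exact_mod_cast hn
  have ratio_le : (1 / n + s) / max 1 s ≤ Real.exp (1 / n) := by
    refine le_trans ?_ (Real.add_one_le_exp _)
    rw [div_le_iff₀ (by positivity), add_mul, one_mul]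
    exact add_le_add (le_mul_of_one_le_right (by positivity) (le_max_left _ _)) (le_max_right _ _)
  have ratio_pow_le : ((1 / n + s) / max 1 s) ^ m ≤ Real.exp 1 :=
    (pow_le_pow_left₀ (by positivity) ratio_le m).trans <| by
      rw [← Real.exp_nat_mul, Real.exp_le_exp, mul_one_div, div_le_one hn0]
      exact_mod_cast hmn
  rw [mul_one_div, le_div_iff₀ (by positivity), one_div_mul_eq_div, ← div_pow]
  exact ratio_pow_le

lemma uniformProb_earlyConfiguration_le (hn : 2 ≤ n) (z g : Fin n) (M : Fin n ≃ Fin n) (k : ℕ) :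
    uniformProb (fun P => EarlyConfiguration z P M g k) ≤
      Real.exp 3 * (2 / 3) ^ (k - 2) * n ^ 2 / (n - 2).factorial := by
  rcases eq_or_ne g z with rfl | hgz
  · rw [uniformProb, Nat.card_eq_zero.2 (.inl ⟨fun P => P.2.ne rfl⟩), Nat.cast_zero, zero_div]
    positivity
  set m := n - 2
  have hmn : (m : ℝ) + 2 = n := by exact_mod_cast Nat.sub_add_cancel hn
  have hcard : Fintype.card {i : Fin n // i ≠ z ∧ i ≠ g} = m := by
    have : ({i | i ≠ z ∧ i ≠ g} : Finset (Fin n)) = {z, g}ᶜ := by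
      ext i
      simp
    rw [Fintype.card_subtype, this, card_compl, card_pair hgz.symm, Fintype.card_fin]
  have hprob := uniformProb_le_of_le_outsiderWeight (.subtype fun i => i ≠ z ∧ i ≠ g)
    ((Function.Embedding.subtype fun i => i ≠ z ∧ i ≠ g).trans M.toEmbedding) (S := {z, g})
    (u := fun a => if a = z then -1 / 2 else 1) (D := ∅) (E := Real.exp 1) (A := 1 / n)
    (w := (3 / 2) ^ (k - 2)) (p := fun P => EarlyConfiguration z P M g k)
    (fun i => by simpa using i.2) (fun a _ => by split_ifs <;> norm_num)
    (fun _ => notMem_empty _) (Real.exp_pos 1).le (by positivity) (fun s hs => by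
      rw [sum_pair hgz.symm, if_pos rfl, if_neg hgz, card_empty, hcard, Nat.cast_zero, zero_add]
      refine le_trans (mul_le_of_le_one_left (by positivity) (Real.exp_le_one_iff.2 (by linarith)))
        (one_div_max_one_pow_le (Nat.sub_le n 2) (zero_lt_two.trans_le hn) hs))
    (by positivity) fun P hP =>
    ⟨hP.stableOff.isContent (fun _ h => h.1) fun _ _ _ ha => absurd ha (notMem_empty _),
      pow_le_outsiderWeight_pair hP⟩
  rw [hcard] at hprob
  calc _ ≤ _ := hprob
    _ = Real.exp 3 * (2 / 3) ^ (k - 2) * (1 + m * n) / m.factorial := by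
        rw [← Real.exp_add, ← inv_div 3 2, inv_pow]
        norm_num
        field_simp
    _ ≤ _ := by
        gcongr
        rw [← hmn]
        nlinarith

lemma uniformProb_exists_earlyConfiguration_le (hn : 2 ≤ n) (z : Fin n) (k : ℕ) :
    uniformProb (fun P => ∃ M g, EarlyConfiguration z P M g k) ≤
      Real.exp 3 * n ^ 5 * (2 / 3) ^ (k - 2) := by
  calc _ = uniformProb fun P => ∃ q : Equiv.Perm (Fin n) × Fin n,
          EarlyConfiguration z P q.1 q.2 k := by simp only [Prod.exists]
    _ ≤ ∑ q : Equiv.Perm (Fin n) × Fin n,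
          uniformProb fun P => EarlyConfiguration z P q.1 q.2 k :=
        uniformProb_exists_le fun (q : Equiv.Perm (Fin n) × Fin n) P =>
          EarlyConfiguration z P q.1 q.2 k
    _ ≤ ∑ _q : Equiv.Perm (Fin n) × Fin n,
          Real.exp 3 * (2 / 3) ^ (k - 2) * n ^ 2 / (n - 2).factorial :=
        sum_le_sum fun q _ => uniformProb_earlyConfiguration_le hn z q.2 q.1 k
    _ = Real.exp 3 * (n ^ 4 * (n - 1 : ℕ)) * (2 / 3) ^ (k - 2) := by
        rw [sum_const, card_univ, Fintype.card_prod, Fintype.card_perm, Fintype.card_fin,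
          nsmul_eq_mul, ← Nat.mul_factorial_pred (by omega : n ≠ 0),
          ← Nat.mul_factorial_pred (by omega : n - 1 ≠ 0), Nat.sub_sub]
        push_cast
        field_simp
    _ ≤ _ := by
        rw [pow_succ (n : ℝ) 4]
        gcongr
        exact Nat.sub_le n 1

end ConfigurationProbabilities

section TailBounds

variable {n : ℕ} {z : Fin n} {P : PrefProfile n} {k₁ k₂ : ℕ} {w : ℝ}

lemma recordCount_le_recordCount (π : Equiv.Perm (Fin n)) {l₁ l₂ : ℕ} (h₁ : k₁ ≤ l₁)
    (h₂ : l₂ ≤ k₂) : recordCount π l₁ l₂ ≤ recordCount π k₁ k₂ :=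
  card_le_card <| monotone_filter_right _ fun _ _ hi =>
    ⟨⟨h₁.trans hi.1.1, hi.1.2.trans_le h₂⟩, hi.2⟩

lemma EarlyConfiguration.anti {M : Fin n ≃ Fin n} {g : Fin n} (h : EarlyConfiguration z P M g k₂)
    (hk : k₁ ≤ k₂) : EarlyConfiguration z P M g k₁ :=
  { h with le_suitorCount := hk.trans h.le_suitorCount }

lemma LateConfiguration.mono {M : Fin n ≃ Fin n} (h : LateConfiguration z P M k₁)
    (hk : k₁ ≤ k₂) : LateConfiguration z P M k₂ :=
  { h with suitorCount_le := h.suitorCount_le.trans hk }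

lemma uniformProb_lt_stableHusbandCount_withRanking_le (hn : 2 ≤ n) (P : PrefProfile n)
    (z : Fin n) (hw : 1 ≤ w) (x : ℝ) :
    uniformProb (fun s => x < stableHusbandCount n (withRanking P z s) z) ≤
      w ^ (-x) * (Real.exp 1 * n) ^ (w - 1) := by
  obtain ⟨e, _, _, _, _, sandwich⟩ := exists_recordCount_sandwich hn P z
  calc _ ≤ uniformProb fun s : Equiv.Perm (Fin n) => x < recordCount (e.trans s) 0 n :=
        uniformProb_mono fun s hs => hs.trans_le (by exact_mod_cast (sandwich s).2)
    _ = uniformProb fun π : Equiv.Perm (Fin n) => x < recordCount π 0 n :=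
        uniformProb_comp_equiv (Equiv.mulRight e)
          fun π : Equiv.Perm (Fin n) => x < recordCount π 0 n
    _ ≤ _ := uniformProb_lt_recordCount_le (by omega) hw x

lemma uniformProb_stableHusbandCount_withRanking_lt_le (hn : 2 ≤ n)
    (hearly : ¬∃ M g, EarlyConfiguration z P M g (k₁ + 1))
    (hlate : ¬∃ M, LateConfiguration z P M k₂) (hk : k₁ ≤ k₂) (hk₂ : k₂ ≤ n)
    (hw0 : 0 < w) (hw1 : w ≤ 1) (x : ℝ) :
    uniformProb (fun s => stableHusbandCount n (withRanking P z s) z < x) ≤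
      w ^ (-x) * (((k₁ : ℝ) + 1) / (k₂ + 1)) ^ (1 - w) := by
  obtain ⟨e, l₁, l₂, ⟨M, g, early⟩, ⟨M', late⟩, sandwich⟩ := exists_recordCount_sandwich hn P z
  have hl₁ : l₁ ≤ k₁ := by
    by_contra! h
    exact hearly ⟨M, g, early.anti h⟩
  have hl₂ : k₂ ≤ l₂ := by
    by_contra! h
    exact hlate ⟨M', late.mono h.le⟩
  calc _ ≤ uniformProb fun s : Equiv.Perm (Fin n) => recordCount (e.trans s) k₁ k₂ < x :=
        uniformProb_mono fun s hs => lt_of_le_of_lt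
          (by exact_mod_cast (recordCount_le_recordCount _ hl₁ hl₂).trans (sandwich s).1) hs
    _ = uniformProb fun π : Equiv.Perm (Fin n) => recordCount π k₁ k₂ < x :=
        uniformProb_comp_equiv (Equiv.mulRight e)
          fun π : Equiv.Perm (Fin n) => recordCount π k₁ k₂ < x
    _ ≤ _ := uniformProb_recordCount_lt_le hk hk₂ hw0 hw1 x

lemma uniformProb_stableHusbandCount_lt_or_lt_le (hn : 2 ≤ n) (z : Fin n) (hk₂1 : 1 ≤ k₂)
    (hk : k₁ ≤ k₂) (hk₂ : k₂ ≤ n) (hnk : n - 1 ≤ 4 * k₂ ^ 2) {v : ℝ} (hv0 : 0 < v) (hv1 : v ≤ 1)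
    (hw : 1 ≤ w) (x y : ℝ) :
    uniformProb (fun P => stableHusbandCount n P z < x ∨ y < stableHusbandCount n P z) ≤
      Real.exp 3 * n ^ 5 * (2 / 3) ^ (k₁ + 1 - 2) +
        Real.exp 3 * (2 * n ^ 2) * Real.exp (-((n - 1 : ℕ) / (4 * k₂))) +
        (v ^ (-x) * (((k₁ : ℝ) + 1) / (k₂ + 1)) ^ (1 - v) +
          w ^ (-y) * (Real.exp 1 * n) ^ (w - 1)) := by
  let bad : PrefProfile n → Prop := fun P =>
    (∃ M g, EarlyConfiguration z P M g (k₁ + 1)) ∨ ∃ M, LateConfiguration z P M k₂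
  have bad_le : uniformProb bad ≤ Real.exp 3 * n ^ 5 * (2 / 3) ^ (k₁ + 1 - 2) +
      Real.exp 3 * (2 * n ^ 2) * Real.exp (-((n - 1 : ℕ) / (4 * k₂))) :=
    (uniformProb_or_le _ _).trans <| add_le_add
      (uniformProb_exists_earlyConfiguration_le hn z _)
      (uniformProb_exists_lateConfiguration_le z hk₂1 hnk)
  refine (uniformProb_le_add_of_forall_withRanking z (bad := bad) (by positivity)
    fun P hP => ?_).trans (add_le_add_left bad_le _)
  obtain ⟨hearly, hlate⟩ := not_or.1 hP
  exact (uniformProb_or_le _ _).trans <| add_le_add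
    (uniformProb_stableHusbandCount_withRanking_lt_le hn hearly hlate hk hk₂ hv0 hv1 x)
    (uniformProb_lt_stableHusbandCount_withRanking_le hn P z hw y)

end TailBounds

section Asymptotics

variable {c C γ ε x : ℝ}

lemma exists_pow_mul_exp_neg_mul_rpow_le {a : ℝ} (ha : 0 < a) (hε : 0 < ε) (d : ℕ) (γ : ℝ) :
    ∃ K : ℝ, 0 < K ∧ ∀ x : ℝ, 1 ≤ x → x ^ d * Real.exp (-(a * x ^ ε)) ≤ K * x ^ (-γ) := by
  obtain ⟨N, hN⟩ := exists_nat_ge ((d + γ) / ε)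
  refine ⟨N.factorial / a ^ N, by positivity, fun x hx => ?_⟩
  have hx0 : 0 < x := by linarith
  have exp_ge : (a * x ^ ε) ^ N / N.factorial ≤ Real.exp (a * x ^ ε) :=
    Real.pow_div_factorial_le_exp _ (by positivity) N
  have pow_ge : x ^ (d + γ) ≤ (x ^ ε) ^ N := by
    rw [← Real.rpow_mul_natCast hx0.le]
    exact Real.rpow_le_rpow_of_exponent_le hx ((div_le_iff₀' hε).1 hN)
  calc x ^ d * Real.exp (-(a * x ^ ε))
      ≤ x ^ d * ((a * x ^ ε) ^ N / N.factorial)⁻¹ := by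
        rw [Real.exp_neg]
        gcongr
    _ = N.factorial / a ^ N * (x ^ d / (x ^ ε) ^ N) := by
        rw [mul_pow]
        field_simp
    _ ≤ N.factorial / a ^ N * (x ^ d / x ^ (d + γ)) := by gcongr
    _ = N.factorial / a ^ N * x ^ (-γ) := by
        rw [← Real.rpow_natCast x d, ← Real.rpow_sub hx0]
        congr 2
        ring

lemma rpow_neg_mul_log_mul_rpow_eq (hC : 0 < C) (hx : 0 < x) :
    C ^ (-(C * Real.log x)) * (Real.exp 1 * x) ^ (C - 1) =
      Real.exp (C - 1) * x ^ (-(C * Real.log C - C + 1)) := by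
  rw [Real.rpow_def_of_pos hC, Real.rpow_def_of_pos (by positivity), Real.rpow_def_of_pos hx,
    Real.log_mul (Real.exp_pos 1).ne' hx.ne', Real.log_exp, ← Real.exp_add, ← Real.exp_add]
  congr 1
  ring

lemma floor_rpow_add_one_div_ceil_rpow_add_one_le (hx : 1 ≤ x) (hε : 0 ≤ ε) :
    ((⌊x ^ ε⌋₊ : ℝ) + 1) / (⌈x ^ (1 - ε)⌉₊ + 1) ≤ 2 * x ^ (2 * ε - 1) := by
  have hx0 : 0 < x := by linarith
  have one_le : 1 ≤ x ^ ε := Real.one_le_rpow hx hε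
  calc _ ≤ (x ^ ε + x ^ ε) / x ^ (1 - ε) := by
        gcongr
        · exact Nat.floor_le (by positivity)
        · exact (Nat.le_ceil _).trans (by linarith)
    _ = 2 * x ^ (2 * ε - 1) := by
        rw [← two_mul, mul_div_assoc, ← Real.rpow_sub hx0]
        congr 2
        ring

lemma rpow_neg_mul_log_mul_floor_div_ceil_rpow_le (hc0 : 0 < c) (hc1 : c ≤ 1) (hx : 1 ≤ x)
    (hε : 0 ≤ ε) (hγ : γ ≤ 1 - c + c * Real.log c - 2 * ε * (1 - c)) :
    c ^ (-(c * Real.log x)) *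
        (((⌊x ^ ε⌋₊ : ℝ) + 1) / (⌈x ^ (1 - ε)⌉₊ + 1)) ^ (1 - c) ≤ 2 * x ^ (-γ) := by
  have hx0 : 0 < x := by linarith
  have rpow_swap : c ^ (-(c * Real.log x)) = x ^ (-(c * Real.log c)) := by
    rw [Real.rpow_def_of_pos hc0, Real.rpow_def_of_pos hx0]
    congr 1
    ring
  calc _ ≤ x ^ (-(c * Real.log c)) * (2 * x ^ (2 * ε - 1)) ^ (1 - c) := by
        rw [rpow_swap]
        gcongr
        exact floor_rpow_add_one_div_ceil_rpow_add_one_le hx hε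
    _ = 2 ^ (1 - c) * x ^ (-(c * Real.log c) + (2 * ε - 1) * (1 - c)) := by
        rw [Real.mul_rpow zero_le_two (by positivity), ← Real.rpow_mul hx0.le,
          Real.rpow_add hx0]
        ring
    _ ≤ 2 ^ (1 : ℝ) * x ^ (-γ) := by
        gcongr
        exacts [one_le_two, by linarith, by linarith]
    _ = 2 * x ^ (-γ) := by rw [Real.rpow_one]

lemma two_thirds_pow_floor_le {y : ℝ} (hy : 1 ≤ y) :
    (2 / 3 : ℝ) ^ (⌊y⌋₊ + 1 - 2) ≤ Real.exp 1 * Real.exp (-(1 / 16 * y)) := by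
  have hfloor : 1 ≤ ⌊y⌋₊ := (Nat.one_le_floor_iff y).2 hy
  have floor_gt := Nat.lt_floor_add_one y
  calc (2 / 3 : ℝ) ^ (⌊y⌋₊ + 1 - 2) ≤ Real.exp (-(1 / 3)) ^ (⌊y⌋₊ - 1) := by
        refine pow_le_pow_left₀ (by norm_num) ?_ _
        linarith [Real.one_sub_le_exp_neg (1 / 3)]
    _ ≤ Real.exp (1 + -(1 / 16 * y)) := by
        rw [← Real.exp_nat_mul, Nat.cast_sub hfloor, Nat.cast_one, Real.exp_le_exp]
        linarith
    _ = _ := Real.exp_add _ _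

lemma mul_rpow_le_sub_one_div_ceil {n : ℕ} (hn : 2 ≤ n) (hε : ε ≤ 1) :
    1 / 16 * (n : ℝ) ^ ε ≤ (n - 1 : ℕ) / (4 * ⌈(n : ℝ) ^ (1 - ε)⌉₊) := by
  have hn2 : (2 : ℝ) ≤ n := by exact_mod_cast hn
  have hn0 : (0 : ℝ) < n := by linarith
  have one_le : 1 ≤ (n : ℝ) ^ (1 - ε) := Real.one_le_rpow (by linarith) (by linarith)
  have ceil_le := Nat.ceil_lt_add_one (zero_le_one.trans one_le)
  calc 1 / 16 * (n : ℝ) ^ ε = n / 2 / (4 * (2 * (n : ℝ) ^ (1 - ε))) := by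
        rw [Real.rpow_sub hn0, Real.rpow_one]
        field_simp
        norm_num
    _ ≤ (n - 1 : ℕ) / (4 * ⌈(n : ℝ) ^ (1 - ε)⌉₊) := by
        rw [Nat.cast_sub (by omega), Nat.cast_one]
        gcongr <;> linarith

lemma configuration_terms_le {n : ℕ} (hn : 2 ≤ n) (hε0 : 0 ≤ ε) (hε1 : ε ≤ 1) :
    Real.exp 3 * n ^ 5 * (2 / 3) ^ (⌊(n : ℝ) ^ ε⌋₊ + 1 - 2) +
        Real.exp 3 * (2 * n ^ 2) *
          Real.exp (-((n - 1 : ℕ) / (4 * ⌈(n : ℝ) ^ (1 - ε)⌉₊))) ≤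
      Real.exp 3 * (Real.exp 1 + 2) * (n ^ 5 * Real.exp (-(1 / 16 * (n : ℝ) ^ ε))) := by
  have hn1 : (1 : ℝ) ≤ n := by exact_mod_cast one_le_two.trans hn
  calc _ ≤ Real.exp 3 * n ^ 5 * (Real.exp 1 * Real.exp (-(1 / 16 * (n : ℝ) ^ ε))) +
          Real.exp 3 * (2 * n ^ 5) * Real.exp (-(1 / 16 * (n : ℝ) ^ ε)) := by
        gcongr
        · exact two_thirds_pow_floor_le (Real.one_le_rpow hn1 hε0)
        · norm_num
        · exact mul_rpow_le_sub_one_div_ceil hn hε1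
    _ = _ := by ring

lemma le_four_mul_ceil_rpow_sq (hx : 1 ≤ x) (hε : ε ≤ 1 / 2) :
    x ≤ 4 * (⌈x ^ (1 - ε)⌉₊ : ℝ) ^ 2 := by
  calc x = x ^ (1 / 2 : ℝ) * x ^ (1 / 2 : ℝ) := by
        rw [← Real.rpow_add (by linarith)]
        norm_num
    _ ≤ ⌈x ^ (1 - ε)⌉₊ * ⌈x ^ (1 - ε)⌉₊ := by
        have : x ^ (1 / 2 : ℝ) ≤ ⌈x ^ (1 - ε)⌉₊ :=
          (Real.rpow_le_rpow_of_exponent_le hx (by linarith)).trans (Nat.le_ceil _)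
        gcongr
    _ ≤ _ := by nlinarith [sq_nonneg (⌈x ^ (1 - ε)⌉₊ : ℝ)]

end Asymptotics

lemma uniformProb_stableHusbandCount_lt_or_lt_log_le {c C γ ε : ℝ} (hc0 : 0 < c) (hc1 : c ≤ 1)
    (hC : 1 ≤ C) (hε0 : 0 ≤ ε) (hε : ε ≤ 1 / 2)
    (hγ1 : γ ≤ 1 - c + c * Real.log c - 2 * ε * (1 - c))
    (hγ2 : γ ≤ C * Real.log C - C + 1) {n : ℕ} (hn : 2 ≤ n) (z : Fin n) :
    uniformProb (fun P : PrefProfile n =>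
        stableHusbandCount n P z < c * Real.log n ∨ C * Real.log n < stableHusbandCount n P z) ≤
      Real.exp 3 * (Real.exp 1 + 2) * (n ^ 5 * Real.exp (-(1 / 16 * (n : ℝ) ^ ε))) +
        (2 + Real.exp (C - 1)) * (n : ℝ) ^ (-γ) := by
  have hn1 : (1 : ℝ) ≤ n := by exact_mod_cast one_le_two.trans hn
  have window_le : ⌊(n : ℝ) ^ ε⌋₊ ≤ ⌈(n : ℝ) ^ (1 - ε)⌉₊ :=
    (Nat.floor_le_floor (Real.rpow_le_rpow_of_exponent_le hn1 (by linarith))).trans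
      (Nat.floor_le_ceil _)
  have window_end_le : ⌈(n : ℝ) ^ (1 - ε)⌉₊ ≤ n :=
    Nat.ceil_le.2 (Real.rpow_le_self_of_one_le hn1 (by linarith))
  have window_end_pos : 1 ≤ ⌈(n : ℝ) ^ (1 - ε)⌉₊ := Nat.one_le_ceil_iff.2 (by positivity)
  have le_window_end_sq : n - 1 ≤ 4 * ⌈(n : ℝ) ^ (1 - ε)⌉₊ ^ 2 :=
    (Nat.sub_le n 1).trans (by exact_mod_cast le_four_mul_ceil_rpow_sq hn1 hε)
  calc _ ≤ _ := uniformProb_stableHusbandCount_lt_or_lt_le hn z window_end_pos window_le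
        window_end_le le_window_end_sq hc0 hc1 hC _ _
    _ ≤ _ := by
        rw [add_mul 2, rpow_neg_mul_log_mul_rpow_eq (by linarith) (by linarith)]
        refine add_le_add (configuration_terms_le hn hε0 (by linarith)) (add_le_add
          (rpow_neg_mul_log_mul_floor_div_ceil_rpow_le hc0 hc1 hn1 hε0 hγ1) ?_)
        gcongr

theorem main_theorem_quantitative_general {c C γ : ℝ} (hc0 : 0 < c) (hc1 : c < 1) (hC : 1 ≤ C)
    (hγ1 : γ < 1 - c + c * Real.log c) (hγ2 : γ ≤ C * Real.log C - C + 1) :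
    ∃ K : ℝ, 0 < K ∧ ∀ n : ℕ, 2 ≤ n → ∀ z : Fin n,
      uniformProb (fun P : PrefProfile n =>
          (stableHusbandCount n P z : ℝ) < c * Real.log n ∨
          C * Real.log n < (stableHusbandCount n P z : ℝ)) ≤ K * (n : ℝ) ^ (-γ) := by
  obtain ⟨ε, hε0, hε⟩ := exists_between
    (show 0 < min (1 / 2) ((1 - c + c * Real.log c - γ) / (2 * (1 - c))) by
      rw [lt_min_iff]
      exact ⟨one_half_pos, div_pos (sub_pos.2 hγ1) (by positivity)⟩)
  obtain ⟨hε_half, hεγ⟩ := lt_min_iff.1 hε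
  rw [lt_div_iff₀ (by positivity)] at hεγ
  obtain ⟨K, hK0, hK⟩ := exists_pow_mul_exp_neg_mul_rpow_le (a := 1 / 16) (by norm_num) hε0 5 γ
  refine ⟨Real.exp 3 * (Real.exp 1 + 2) * K + (2 + Real.exp (C - 1)), by positivity,
    fun n hn z => ?_⟩
  have hn1 : (1 : ℝ) ≤ n := by exact_mod_cast one_le_two.trans hn
  calc _ ≤ _ := uniformProb_stableHusbandCount_lt_or_lt_log_le hc0 hc1.le hC hε0.le hε_half.le
        (by linarith) hγ2 hn z
    _ ≤ Real.exp 3 * (Real.exp 1 + 2) * (K * (n : ℝ) ^ (-γ)) +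
          (2 + Real.exp (C - 1)) * (n : ℝ) ^ (-γ) := by
        gcongr _ * ?_ + _
        exact hK n hn1
    _ = _ := by ring

lemma one_sub_two_mul_sq_div_two_le {c : ℝ} (hc0 : 0 < c) (hc : c ≤ 1 / 2) :
    (1 - 2 * c) ^ 2 / 2 ≤ 1 - c + c * Real.log c := by
  have log_ge : 1 - (2 * c)⁻¹ ≤ Real.log 2 + Real.log c := by
    rw [← Real.log_mul two_ne_zero hc0.ne']
    exact Real.one_sub_inv_le_log_of_pos (by positivity)
  have mul_log_ge := mul_le_mul_of_nonneg_left log_ge hc0.le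
  have mul_inv_eq : c * (1 - (2 * c)⁻¹) = c - 1 / 2 := by
    field_simp
  nlinarith [Real.log_two_lt_d9]

lemma two_mul_add_cube_le_log {C : ℝ} (hC : 1 ≤ C) :
    2 * ((C - 1) / (C + 1)) + 2 / 3 * ((C - 1) / (C + 1)) ^ 3 ≤ Real.log C := by
  have hC' : (1 + (C - 1) / (C + 1)) / (1 - (C - 1) / (C + 1)) = C := by
    field_simp
    ring
  have h := Real.sum_range_le_log_div (x := (C - 1) / (C + 1))
    (div_nonneg (by linarith) (by linarith)) ((div_lt_one (by linarith)).2 (by linarith)) 2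
  rw [hC', sum_range_succ, sum_range_one] at h
  norm_num at h
  linarith

lemma sq_div_two_sub_cube_div_six_le {C : ℝ} (hC : 1 ≤ C) :
    (C - 1) ^ 2 / 2 - (C - 1) ^ 3 / 6 ≤ C * Real.log C - C + 1 := by
  have excess_nonneg : 0 ≤ (C - 1) ^ 4 * (2 / 3 + (C - 1) / 2 + (C - 1) ^ 2 / 6) / (C + 1) ^ 3 := by
    have : 0 ≤ C - 1 := sub_nonneg.2 hC
    positivity
  have excess_eq : C * (2 * ((C - 1) / (C + 1)) + 2 / 3 * ((C - 1) / (C + 1)) ^ 3) - C + 1 -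
      ((C - 1) ^ 2 / 2 - (C - 1) ^ 3 / 6) =
        (C - 1) ^ 4 * (2 / 3 + (C - 1) / 2 + (C - 1) ^ 2 / 6) / (C + 1) ^ 3 := by
    field_simp
    ring
  linarith [mul_le_mul_of_nonneg_left (two_mul_add_cube_le_log hC) (zero_le_one.trans hC)]

/-- **Quantitative refinement of the main theorem.** Fix constants `0 < c < 1/2`,
`C > 1` and `γ > 0` with `γ < (1 - 2c)²/2` and `γ < (C - 1)²/2 - (C - 1)³/6`.
Under a uniformly random preference profile for `n` girls and `n` boys
(probability = number of favorable profiles divided by the total number of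
profiles), there is a constant `K > 0` such that for all `n ≥ 2` the number
`Hₙ` of stable husbands of girl `0` satisfies
`Pr(Hₙ < c ln n ∨ Hₙ > C ln n) ≤ K n^(-γ)`. -/
theorem main_theorem_quantitative (c C γ : ℝ)
    (hc0 : 0 < c) (hc : c < 1 / 2) (hC : 1 < C) (hγ0 : 0 < γ)
    (hγ1 : γ < (1 - 2 * c) ^ 2 / 2) (hγ2 : γ < (C - 1) ^ 2 / 2 - (C - 1) ^ 3 / 6) :
    ∃ K : ℝ, 0 < K ∧ ∀ n : ℕ, ∀ hn : 2 ≤ n,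
      (Nat.card {P : PrefProfile n //
          (stableHusbandCount n P ⟨0, by omega⟩ : ℝ) < c * Real.log n ∨
          C * Real.log n < (stableHusbandCount n P ⟨0, by omega⟩ : ℝ)} : ℝ) /
        (Nat.card (PrefProfile n) : ℝ) ≤ K * (n : ℝ) ^ (-γ) := by
  obtain ⟨K, hK0, hK⟩ := main_theorem_quantitative_general hc0 (by linarith) hC.le
    (hγ1.trans_le (one_sub_two_mul_sq_div_two_le hc0 hc.le))
    (hγ2.le.trans (sq_div_two_sub_cube_div_six_le hC.le))
  exact ⟨K, hK0, fun n hn => hK n hn _⟩
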